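/- arXiv:2110.04059 — 4 statements merged into one kernel-verified Lean document; each statement's English description precedes it below -/
import Mathlib

section
/- Let α > -1/2, let τ ∈ ℝ[X] have no zeros on [-1,1], and let π_i, π_m ∈ ℝ[X] satisfy the cleared eigenvalue equations (1 - X²)·(τ·π'' - 2·τ'·π' + τ''·π) - (2α+1)·X·τ·π' + (2α-1)·X·τ'·π = λ·τ·π in ℝ[X] with (π, λ) = (π_i, λ_i) and (π, λ) = (π_m, λ_m) respectively, where λ_i ≠ λ_m. Define W^{(α)}_τ(z) = (1-z²)^{α-1/2}/τ(z)², ρ_{ab}(z) = ∫_{-1}^{z} π_a(u)·π_b(u)·W^{(α)}_τ(u) du for (a,b) ∈ {(m,m),(i,m)}, τ_m(z) = τ(z)·(1 + t·ρ_{mm}(z)), and π_{m;i}(z) = (1 + t·ρ_{mm}(z))·π_i(z) - t·ρ_{im}(z)·π_m(z), for a fixed t ∈ ℝ. Then for all z ∈ (-1,1): (1-z²)·(τ_m·π_{m;i}'' - 2·τ_m'·π_{m;i}' + τ_m''·π_{m;i}) - (2α+1)·z·τ_m·π_{m;i}' + (2α-1)·z·τ_m'·π_{m;i} = λ_i·τ_m·π_{m;i}.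 -/
open Polynomial

/-- The weight `W^{(α)}_τ(z) = (1-z²)^{α-1/2}/τ(z)²`. -/
noncomputable def gegenWeight (α : ℝ) (τ : Polynomial ℝ) (z : ℝ) : ℝ :=
  (1 - z ^ 2) ^ (α - 1/2 : ℝ) / (τ.eval z) ^ 2

/-- `ρ_{ab}(z) = ∫_{-1}^z π_a π_b W^{(α)}_τ`. -/
noncomputable def rhoInt (α : ℝ) (τ pa pb : Polynomial ℝ) (z : ℝ) : ℝ :=
  ∫ u in (-1 : ℝ)..z, pa.eval u * pb.eval u * gegenWeight α τ u

/-- The transformed τ-function `τ_m = τ(1 + tρ_{mm})`. -/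
noncomputable def tauCDT (α : ℝ) (τ πm : Polynomial ℝ) (t : ℝ) (z : ℝ) : ℝ :=
  τ.eval z * (1 + t * rhoInt α τ πm πm z)

/-- The transformed eigenfunction `π_{m;i} = (1 + tρ_{mm})π_i - tρ_{im}π_m`. -/
noncomputable def piCDT (α : ℝ) (τ πm πi : Polynomial ℝ) (t : ℝ) (z : ℝ) : ℝ :=
  (1 + t * rhoInt α τ πm πm z) * πi.eval z - t * rhoInt α τ πi πm z * πm.eval z

/-!
With denominators cleared, `T_τ y` is a bilinear form in `τ` and `y`, with leading coefficient
`p = 1 - z²`. The Pearson equation of the weight `W` makes the weighted Wronskian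
`p W (y' w - y w')` of two eigenfunctions an antiderivative of `(λ - μ) y w W`. As it vanishes at
the left endpoint, it equals `(λ - μ)σ` with `σ = ∫ y w W`. Inserting the transforms `τ(1 + tρ)`
and `(1 + tρ)y - tσw` into the bilinear form leaves, besides the two original forms, only a multiple
of this Wronskian, and exchanging it for `(λ - μ)σ` turns the eigenvalue `μ` in front of `σw`
into `λ`.
-/

open Set Filter Topology MeasureTheory

/-- The cleared exceptional operator `τ·T_τ y` with leading coefficient `p` and first-order
coefficient `r`, as a bilinear form in `τ` and `y`. The coefficient `p' - r` of `τ' y` is the one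
for which operators of this shape are stable under confluent Darboux transformations. -/
noncomputable def exceptionalForm (p r τ y : ℝ → ℝ) (z : ℝ) : ℝ :=
  p z * (τ z * deriv (deriv y) z - 2 * deriv τ z * deriv y z + deriv (deriv τ) z * y z)
    + r z * (τ z * deriv y z) + (deriv p z - r z) * (deriv τ z * y z)

/-- The Pearson equation at `z` for the weight `W` of the operator `exceptionalForm p r τ`,
multiplied by `τ`; equivalently `(p W)' = (r - 2 p τ'/τ) W` where `τ` does not vanish. -/
structure IsPearsonWeightAt (p r τ W : ℝ → ℝ) (z : ℝ) : Prop where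
  differentiableAt : DifferentiableAt ℝ W z
  mul_deriv_eq : p z * τ z * deriv W z
    = ((r z - deriv p z) * τ z - 2 * p z * deriv τ z) * W z

/-- The function `p W (y' w - y w')`, the boundary term in Green's formula for
`exceptionalForm`. -/
noncomputable def weightedWronskian (p W y w : ℝ → ℝ) (z : ℝ) : ℝ :=
  p z * W z * (deriv y z * w z - y z * deriv w z)

/-- The antiderivative `∫_a^z f g W`, which is `ρ_{fg}` of the paper for `a = -1`. -/
noncomputable def weightedPrimitive (W : ℝ → ℝ) (a : ℝ) (f g : ℝ → ℝ) (z : ℝ) : ℝ :=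
  ∫ u in a..z, f u * g u * W u

/-- The transform `τ(1 + tρ)` of `τ`, for an antiderivative `ρ` of `w² W`. -/
def confluentTau (t : ℝ) (ρ τ : ℝ → ℝ) (z : ℝ) : ℝ :=
  τ z * (1 + t * ρ z)

/-- The transform `(1 + tρ)y - tσw` of `y`, for antiderivatives `ρ` of `w² W` and `σ` of
`y w W`. -/
def confluentEigenfunction (t : ℝ) (ρ σ w y : ℝ → ℝ) (z : ℝ) : ℝ :=
  (1 + t * ρ z) * y z - t * σ z * w z

section ContDiffTwo

variable {𝕜 F : Type*} [NontriviallyNormedField 𝕜] [NormedAddCommGroup F] [NormedSpace 𝕜 F]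
  {f : 𝕜 → F} {x : 𝕜}

lemma differentiableAt_deriv_of_contDiffAt_two (hf : ContDiffAt 𝕜 2 f x) :
    DifferentiableAt 𝕜 (deriv f) x :=
  (hf.derivWithin (m := 1) (by norm_num)).differentiableAt one_ne_zero

lemma eventually_differentiableAt_of_contDiffAt_two (hf : ContDiffAt 𝕜 2 f x) :
    ∀ᶠ u in 𝓝 x, DifferentiableAt 𝕜 f u :=
  (hf.eventually (by simp)).mono fun _ hu => hu.differentiableAt two_ne_zero

end ContDiffTwo

section Derivatives

variable {τ y w W ρ σ : ℝ → ℝ} {z : ℝ}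

lemma hasDerivAt_confluentTau (t : ℝ) (hτ : DifferentiableAt ℝ τ z)
    (hρ : HasDerivAt ρ (w z * w z * W z) z) :
    HasDerivAt (confluentTau t ρ τ)
      (deriv τ z * (1 + t * ρ z) + τ z * (t * (w z * w z * W z))) z :=
  hτ.hasDerivAt.mul ((hρ.const_mul t).const_add 1)

-- The terms `t w² W y` and `t y w W w` cancel.
lemma hasDerivAt_confluentEigenfunction (t : ℝ) (hy : DifferentiableAt ℝ y z)
    (hw : DifferentiableAt ℝ w z) (hρ : HasDerivAt ρ (w z * w z * W z) z)
    (hσ : HasDerivAt σ (y z * w z * W z) z) :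
    HasDerivAt (confluentEigenfunction t ρ σ w y)
      ((1 + t * ρ z) * deriv y z - t * σ z * deriv w z) z := by
  refine ((((hρ.const_mul t).const_add 1).mul hy.hasDerivAt).sub
    ((hσ.const_mul t).mul hw.hasDerivAt)).congr_deriv ?_
  ring

lemma deriv_deriv_confluentTau (t : ℝ) (hτ : ContDiffAt ℝ 2 τ z) (hw : DifferentiableAt ℝ w z)
    (hW : DifferentiableAt ℝ W z) (hρ : ∀ᶠ u in 𝓝 z, HasDerivAt ρ (w u * w u * W u) u) :
    deriv (deriv (confluentTau t ρ τ)) z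
      = deriv (deriv τ) z * (1 + t * ρ z) + 2 * t * deriv τ z * (w z ^ 2 * W z)
        + t * τ z * (2 * w z * deriv w z * W z + w z ^ 2 * deriv W z) := by
  have hderiv : deriv (confluentTau t ρ τ) =ᶠ[𝓝 z]
      fun u => deriv τ u * (1 + t * ρ u) + τ u * (t * (w u * w u * W u)) := by
    filter_upwards [eventually_differentiableAt_of_contDiffAt_two hτ, hρ] with u hτu hρu
    exact (hasDerivAt_confluentTau t hτu hρu).deriv
  have hτ' := (differentiableAt_deriv_of_contDiffAt_two hτ).hasDerivAt.mul
    ((hρ.self_of_nhds.const_mul t).const_add 1)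
  have hρ' := (hτ.differentiableAt two_ne_zero).hasDerivAt.mul
    (((hw.hasDerivAt.mul hw.hasDerivAt).mul hW.hasDerivAt).const_mul t)
  refine hderiv.deriv_eq.trans ((hτ'.add hρ').deriv.trans ?_)
  simp only [Pi.mul_apply]
  ring

lemma deriv_deriv_confluentEigenfunction (t : ℝ) (hy : ContDiffAt ℝ 2 y z)
    (hw : ContDiffAt ℝ 2 w z) (hρ : ∀ᶠ u in 𝓝 z, HasDerivAt ρ (w u * w u * W u) u)
    (hσ : ∀ᶠ u in 𝓝 z, HasDerivAt σ (y u * w u * W u) u) :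
    deriv (deriv (confluentEigenfunction t ρ σ w y)) z
      = (1 + t * ρ z) * deriv (deriv y) z - t * σ z * deriv (deriv w) z
        + t * w z * W z * (deriv y z * w z - y z * deriv w z) := by
  have hderiv : deriv (confluentEigenfunction t ρ σ w y) =ᶠ[𝓝 z]
      fun u => (1 + t * ρ u) * deriv y u - t * σ u * deriv w u := by
    filter_upwards [eventually_differentiableAt_of_contDiffAt_two hy,
      eventually_differentiableAt_of_contDiffAt_two hw, hρ, hσ] with u hyu hwu hρu hσu
    exact (hasDerivAt_confluentEigenfunction t hyu hwu hρu hσu).deriv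
  have hy' := ((hρ.self_of_nhds.const_mul t).const_add 1).mul
    (differentiableAt_deriv_of_contDiffAt_two hy).hasDerivAt
  have hw' := (hσ.self_of_nhds.const_mul t).mul
    (differentiableAt_deriv_of_contDiffAt_two hw).hasDerivAt
  refine hderiv.deriv_eq.trans ((hy'.sub hw').deriv.trans ?_)
  ring

end Derivatives

section ConfluentDarboux

variable {p r τ y w W ρ σ : ℝ → ℝ} {z : ℝ}

lemma exceptionalForm_confluent (t : ℝ) (hτ : ContDiffAt ℝ 2 τ z) (hy : ContDiffAt ℝ 2 y z)
    (hw : ContDiffAt ℝ 2 w z) (hW : IsPearsonWeightAt p r τ W z)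
    (hρ : ∀ᶠ u in 𝓝 z, HasDerivAt ρ (w u * w u * W u) u)
    (hσ : ∀ᶠ u in 𝓝 z, HasDerivAt σ (y u * w u * W u) u) :
    exceptionalForm p r (confluentTau t ρ τ) (confluentEigenfunction t ρ σ w y) z
      = (1 + t * ρ z) ^ 2 * exceptionalForm p r τ y z
        - t * σ z * (1 + t * ρ z) * exceptionalForm p r τ w z
        - t * (1 + t * ρ z) * τ z * w z * weightedWronskian p W y w z := by
  have hτz := hτ.differentiableAt two_ne_zero
  have hyz := hy.differentiableAt two_ne_zero
  have hwz := hw.differentiableAt two_ne_zero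
  simp only [exceptionalForm, weightedWronskian,
    deriv_deriv_confluentTau t hτ hwz hW.differentiableAt hρ,
    deriv_deriv_confluentEigenfunction t hy hw hρ hσ,
    (hasDerivAt_confluentTau t hτz hρ.self_of_nhds).deriv,
    (hasDerivAt_confluentEigenfunction t hyz hwz hρ.self_of_nhds hσ.self_of_nhds).deriv]
  simp only [confluentTau, confluentEigenfunction]
  linear_combination
    ((1 + t * ρ z) * y z - t * σ z * w z) * t * w z ^ 2 * hW.mul_deriv_eq

lemma hasDerivAt_weightedWronskian (hp : DifferentiableAt ℝ p z) (hy : ContDiffAt ℝ 2 y z)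
    (hw : ContDiffAt ℝ 2 w z) (hW : IsPearsonWeightAt p r τ W z) (hτz : τ z ≠ 0) :
    HasDerivAt (weightedWronskian p W y w)
      ((w z * exceptionalForm p r τ y z - y z * exceptionalForm p r τ w z) * W z / τ z) z := by
  have hyz := (hy.differentiableAt two_ne_zero).hasDerivAt
  have hwz := (hw.differentiableAt two_ne_zero).hasDerivAt
  have hy' := (differentiableAt_deriv_of_contDiffAt_two hy).hasDerivAt
  have hw' := (differentiableAt_deriv_of_contDiffAt_two hw).hasDerivAt
  refine ((hp.hasDerivAt.mul hW.differentiableAt.hasDerivAt).mul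
    ((hy'.mul hwz).sub (hyz.mul hw'))).congr_deriv ?_
  rw [eq_div_iff hτz]
  simp only [exceptionalForm, Pi.mul_apply, Pi.sub_apply]
  linear_combination (deriv y z * w z - y z * deriv w z) * hW.mul_deriv_eq

lemma sub_mul_weightedPrimitive_eq_weightedWronskian {a b lam mu : ℝ}
    (hp : ∀ u ∈ Ioo a b, DifferentiableAt ℝ p u) (hτ0 : ∀ u ∈ Ioo a b, τ u ≠ 0)
    (hy : ContDiffOn ℝ 2 y (Ioo a b)) (hw : ContDiffOn ℝ 2 w (Ioo a b))
    (hW : ∀ u ∈ Ioo a b, IsPearsonWeightAt p r τ W u)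
    (hy_eigen : ∀ u ∈ Ioo a b, exceptionalForm p r τ y u = lam * τ u * y u)
    (hw_eigen : ∀ u ∈ Ioo a b, exceptionalForm p r τ w u = mu * τ u * w u)
    (hlim : Tendsto (weightedWronskian p W y w) (𝓝[>] a) (𝓝 0)) (hz : z ∈ Ioo a b)
    (hint : IntervalIntegrable (fun u => y u * w u * W u) volume a z) :
    (lam - mu) * weightedPrimitive W a y w z = weightedWronskian p W y w z := by
  have hderiv : ∀ u ∈ Ioo a b, HasDerivAt (weightedWronskian p W y w)
      ((lam - mu) * (y u * w u * W u)) u := by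
    intro u hu
    have hnhds := isOpen_Ioo.mem_nhds hu
    refine (hasDerivAt_weightedWronskian (hp u hu) (hy.contDiffAt hnhds) (hw.contDiffAt hnhds)
      (hW u hu) (hτ0 u hu)).congr_deriv ?_
    rw [hy_eigen u hu, hw_eigen u hu, div_eq_iff (hτ0 u hu)]
    ring
  rw [weightedPrimitive, ← intervalIntegral.integral_const_mul,
    intervalIntegral.integral_eq_sub_of_hasDerivAt_of_tendsto hz.1
      (fun u hu => hderiv u (Ioo_subset_Ioo_right hz.2.le hu)) (hint.const_mul _) hlim
      ((hderiv z hz).continuousAt.tendsto.mono_left nhdsWithin_le_nhds), sub_zero]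

lemma hasDerivAt_weightedPrimitive {a b : ℝ} {f g : ℝ → ℝ} (hf : ContinuousOn f (Ioo a b))
    (hg : ContinuousOn g (Ioo a b)) (hW : ContinuousOn W (Ioo a b)) (hz : z ∈ Ioo a b)
    (hint : IntervalIntegrable (fun u => f u * g u * W u) volume a z) :
    HasDerivAt (weightedPrimitive W a f g) (f z * g z * W z) z := by
  have hcont : ∀ u ∈ Ioo a b, ContinuousAt (fun u => f u * g u * W u) u := fun u hu =>
    ((hf.mul hg).mul hW).continuousAt (isOpen_Ioo.mem_nhds hu)
  exact intervalIntegral.integral_hasDerivAt_right hint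
    (ContinuousAt.stronglyMeasurableAtFilter isOpen_Ioo hcont z hz) (hcont z hz)

theorem exceptionalForm_confluentDarboux {a b lam mu : ℝ} (t : ℝ)
    (hp : ∀ u ∈ Ioo a b, DifferentiableAt ℝ p u) (hτ : ContDiffOn ℝ 2 τ (Ioo a b))
    (hτ0 : ∀ u ∈ Ioo a b, τ u ≠ 0) (hy : ContDiffOn ℝ 2 y (Ioo a b))
    (hw : ContDiffOn ℝ 2 w (Ioo a b)) (hW : ∀ u ∈ Ioo a b, IsPearsonWeightAt p r τ W u)
    (hy_eigen : ∀ u ∈ Ioo a b, exceptionalForm p r τ y u = lam * τ u * y u)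
    (hw_eigen : ∀ u ∈ Ioo a b, exceptionalForm p r τ w u = mu * τ u * w u)
    (hww : ∀ u ∈ Ioo a b, IntervalIntegrable (fun v => w v * w v * W v) volume a u)
    (hyw : ∀ u ∈ Ioo a b, IntervalIntegrable (fun v => y v * w v * W v) volume a u)
    (hlim : Tendsto (weightedWronskian p W y w) (𝓝[>] a) (𝓝 0)) (hz : z ∈ Ioo a b) :
    let ρ := weightedPrimitive W a w w
    let σ := weightedPrimitive W a y w
    exceptionalForm p r (confluentTau t ρ τ) (confluentEigenfunction t ρ σ w y) z
      = lam * confluentTau t ρ τ z * confluentEigenfunction t ρ σ w y z := by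
  intro ρ σ
  have hnhds := isOpen_Ioo.mem_nhds hz
  have hW_cont : ContinuousOn W (Ioo a b) := fun u hu =>
    (hW u hu).differentiableAt.continuousAt.continuousWithinAt
  have hρ : ∀ᶠ u in 𝓝 z, HasDerivAt ρ (w u * w u * W u) u :=
    eventually_of_mem hnhds fun u hu =>
      hasDerivAt_weightedPrimitive hw.continuousOn hw.continuousOn hW_cont hu (hww u hu)
  have hσ : ∀ᶠ u in 𝓝 z, HasDerivAt σ (y u * w u * W u) u :=
    eventually_of_mem hnhds fun u hu =>
      hasDerivAt_weightedPrimitive hy.continuousOn hw.continuousOn hW_cont hu (hyw u hu)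
  have hwronskian : (lam - mu) * σ z = weightedWronskian p W y w z :=
    sub_mul_weightedPrimitive_eq_weightedWronskian hp hτ0 hy hw hW hy_eigen hw_eigen hlim hz
      (hyw z hz)
  rw [exceptionalForm_confluent t (hτ.contDiffAt hnhds) (hy.contDiffAt hnhds)
    (hw.contDiffAt hnhds) (hW z hz) hρ hσ, hy_eigen z hz, hw_eigen z hz, ← hwronskian]
  simp only [confluentTau, confluentEigenfunction]
  ring

end ConfluentDarboux

section Gegenbauer

/-- The cleared exceptional Gegenbauer operator `τ·T^{(α)}_τ y`, as a bilinear form in `τ`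
and `y`. -/
noncomputable def gegenbauerForm (α : ℝ) (τ y : ℝ → ℝ) (z : ℝ) : ℝ :=
  (1 - z ^ 2) *
      (τ z * deriv (deriv y) z - 2 * deriv τ z * deriv y z + deriv (deriv τ) z * y z)
    - (2 * α + 1) * z * τ z * deriv y z
    + (2 * α - 1) * z * deriv τ z * y z

/-- The weight `(1-z²)^{α-1/2}/τ(z)²` for an arbitrary function `τ`; it is `gegenWeight` when `τ` is
a polynomial. -/
noncomputable def gegenbauerWeight (α : ℝ) (τ : ℝ → ℝ) (z : ℝ) : ℝ :=
  (1 - z ^ 2) ^ (α - 1 / 2 : ℝ) / τ z ^ 2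

variable {α : ℝ} {τ y w : ℝ → ℝ} {z : ℝ}

lemma hasDerivAt_one_sub_sq (z : ℝ) : HasDerivAt (fun u : ℝ => 1 - u ^ 2) (-(2 * z)) z := by
  simpa using (hasDerivAt_pow 2 z).const_sub 1

lemma one_sub_sq_pos (hz : z ∈ Ioo (-1 : ℝ) 1) : 0 < 1 - z ^ 2 := by
  nlinarith [hz.1, hz.2]

lemma gegenbauerForm_eq_exceptionalForm (α : ℝ) (τ y : ℝ → ℝ) (z : ℝ) :
    gegenbauerForm α τ y z
      = exceptionalForm (fun u => 1 - u ^ 2) (fun u => -(2 * α + 1) * u) τ y z := by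
  rw [gegenbauerForm, exceptionalForm, (hasDerivAt_one_sub_sq z).deriv]
  ring

lemma isPearsonWeightAt_gegenbauerWeight (α : ℝ) (hz : z ∈ Ioo (-1 : ℝ) 1)
    (hτ : DifferentiableAt ℝ τ z) (hτz : τ z ≠ 0) :
    IsPearsonWeightAt (fun u => 1 - u ^ 2) (fun u => -(2 * α + 1) * u) τ
      (gegenbauerWeight α τ) z := by
  have hq := (one_sub_sq_pos hz).ne'
  have hW := ((hasDerivAt_one_sub_sq z).rpow_const (p := α - 1 / 2) (Or.inl hq)).div
    (hτ.hasDerivAt.pow 2) (pow_ne_zero 2 hτz)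
  refine ⟨hW.differentiableAt, ?_⟩
  rw [show deriv (gegenbauerWeight α τ) z = _ from hW.deriv, (hasDerivAt_one_sub_sq z).deriv,
    Real.rpow_sub_one hq]
  simp only [gegenbauerWeight, Pi.pow_apply]
  field_simp
  ring

lemma intervalIntegrable_one_sub_sq_rpow {s : ℝ} (hs : -1 < s) (hz : z ∈ Ioo (-1 : ℝ) 1) :
    IntervalIntegrable (fun u : ℝ => (1 - u ^ 2) ^ s) volume (-1) z := by
  have hleft : IntervalIntegrable (fun u : ℝ => (u + 1) ^ s) volume (-1) z := by
    simpa using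
      (intervalIntegral.intervalIntegrable_rpow' (a := 0) (b := z + 1) hs).comp_add_right 1
  have hright : ContinuousOn (fun u : ℝ => (1 - u) ^ s) (uIcc (-1) z) := by
    rw [uIcc_of_le hz.1.le]
    exact ContinuousOn.rpow_const (by fun_prop) fun u hu => Or.inl (by linarith [hu.2, hz.2])
  refine (hleft.continuousOn_mul hright).congr fun u hu => ?_
  rw [uIoc_of_le hz.1.le] at hu
  rw [show 1 - u ^ 2 = (1 - u) * (u + 1) by ring,
    Real.mul_rpow (by linarith [hu.2, hz.2]) (by linarith [hu.1])]

lemma intervalIntegrable_mul_gegenbauerWeight {f : ℝ → ℝ} (hα : -1 / 2 < α)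
    (hf : ContinuousOn f (Ico (-1) 1)) (hτ : ContinuousOn τ (Ico (-1) 1))
    (hτ0 : ∀ u ∈ Ico (-1 : ℝ) 1, τ u ≠ 0) (hz : z ∈ Ioo (-1 : ℝ) 1) :
    IntervalIntegrable (fun u => f u * gegenbauerWeight α τ u) volume (-1) z := by
  have hsub : uIcc (-1) z ⊆ Ico (-1) 1 := by
    rw [uIcc_of_le hz.1.le]
    exact Icc_subset_Ico_right hz.2
  have hquot : ContinuousOn (fun u => f u / τ u ^ 2) (uIcc (-1) z) :=
    (hf.div (hτ.pow 2) fun u hu => pow_ne_zero 2 (hτ0 u hu)).mono hsub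
  have hpow : IntervalIntegrable (fun u : ℝ => (1 - u ^ 2) ^ (α - 1 / 2)) volume (-1) z :=
    intervalIntegrable_one_sub_sq_rpow (by linarith) hz
  exact (hpow.continuousOn_mul hquot).congr fun _ _ => mul_comm_div _ _ _

lemma tendsto_deriv_nhdsGT {E : Type*} [NormedAddCommGroup E] [NormedSpace ℝ E] {f : ℝ → E}
    {a b : ℝ} (hab : a < b) (hf : ContDiffOn ℝ 1 f (Ico a b)) :
    Tendsto (deriv f) (𝓝[>] a) (𝓝 (derivWithin f (Ico a b) a)) := by
  have hcont := hf.continuousOn_derivWithin (uniqueDiffOn_Ico a b) le_rfl a (left_mem_Ico.2 hab)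
  rw [← nhdsWithin_Ioo_eq_nhdsGT hab]
  refine (hcont.mono_left (nhdsWithin_mono a Ioo_subset_Ico_self)).congr' ?_
  filter_upwards [self_mem_nhdsWithin] with u hu
  exact derivWithin_of_mem_nhds (Ico_mem_nhds hu.1 hu.2)

lemma tendsto_one_sub_sq_mul_gegenbauerWeight (hα : -1 / 2 < α)
    (hτ : ContinuousWithinAt τ (Ioi (-1)) (-1)) (hτ0 : τ (-1) ≠ 0) :
    Tendsto (fun u => (1 - u ^ 2) * gegenbauerWeight α τ u) (𝓝[>] (-1)) (𝓝 0) := by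
  have hpow : Tendsto (fun u : ℝ => (1 - u ^ 2) ^ (α + 1 / 2)) (𝓝[>] (-1)) (𝓝 0) := by
    have hcont : Continuous fun u : ℝ => (1 - u ^ 2) ^ (α + 1 / 2) :=
      Continuous.rpow_const (by fun_prop) fun _ => Or.inr (by linarith)
    refine (hcont.tendsto' (-1) 0 ?_).mono_left nhdsWithin_le_nhds
    rw [show (1 : ℝ) - (-1) ^ 2 = 0 by norm_num, Real.zero_rpow (by linarith)]
  have hquot := hpow.div (hτ.pow 2) (pow_ne_zero 2 hτ0)
  rw [zero_div] at hquot
  refine hquot.congr' ?_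
  filter_upwards [Ioo_mem_nhdsGT (show (-1 : ℝ) < 1 by norm_num)] with u hu
  simp only [gegenbauerWeight, Pi.div_apply, Pi.pow_apply]
  rw [show α + 1 / 2 = α - 1 / 2 + 1 by ring, Real.rpow_add_one (one_sub_sq_pos hu).ne']
  ring

lemma tendsto_weightedWronskian_gegenbauerWeight (hα : -1 / 2 < α)
    (hτ : ContinuousWithinAt τ (Ioi (-1)) (-1)) (hτ0 : τ (-1) ≠ 0)
    (hy : ContDiffOn ℝ 1 y (Ico (-1) 1)) (hw : ContDiffOn ℝ 1 w (Ico (-1) 1)) :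
    Tendsto (weightedWronskian (fun u => 1 - u ^ 2) (gegenbauerWeight α τ) y w)
      (𝓝[>] (-1)) (𝓝 0) := by
  have hlt : (-1 : ℝ) < 1 := by norm_num
  have hlim {f : ℝ → ℝ} (hf : ContDiffOn ℝ 1 f (Ico (-1) 1)) :
      Tendsto f (𝓝[>] (-1)) (𝓝 (f (-1))) :=
    (hf.continuousOn (-1) (left_mem_Ico.2 hlt)).mono_of_mem_nhdsWithin (Ico_mem_nhdsGT hlt)
  have hlim' := ((tendsto_deriv_nhdsGT hlt hy).mul (hlim hw)).sub
    ((hlim hy).mul (tendsto_deriv_nhdsGT hlt hw))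
  have hprod := (tendsto_one_sub_sq_mul_gegenbauerWeight hα hτ hτ0).mul hlim'
  rwa [zero_mul] at hprod

lemma contDiff_polynomial_eval {𝕜 : Type*} [NontriviallyNormedField 𝕜] (q : 𝕜[X])
    (n : WithTop ℕ∞) : ContDiff 𝕜 n q.eval := by
  simpa using! contDiff_aeval q n

lemma gegenbauerForm_eval {lam : ℝ} {τ π : ℝ[X]}
    (h : (1 - X ^ 2) *
        (τ * derivative (derivative π) - 2 * derivative τ * derivative π
          + derivative (derivative τ) * π)
      - C (2 * α + 1) * X * (τ * derivative π)
      + C (2 * α - 1) * X * (derivative τ * π)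
      = C lam * (τ * π)) (z : ℝ) :
    gegenbauerForm α τ.eval π.eval z = lam * τ.eval z * π.eval z := by
  have hderiv (q : ℝ[X]) : deriv q.eval = (derivative q).eval := funext fun _ => q.deriv
  have heval := congrArg (eval z) h
  simp only [eval_add, eval_sub, eval_mul, eval_pow, eval_one, eval_X, eval_C,
    eval_ofNat] at heval
  simp only [gegenbauerForm, hderiv]
  linear_combination heval

end Gegenbauer

theorem statement12_general {α lam mu : ℝ} {τ y w : ℝ → ℝ} (t : ℝ) (hα : -1 / 2 < α)
    (hτ : ContDiffOn ℝ 2 τ (Ico (-1) 1)) (hy : ContDiffOn ℝ 2 y (Ico (-1) 1))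
    (hw : ContDiffOn ℝ 2 w (Ico (-1) 1)) (hτ0 : ∀ z ∈ Ico (-1 : ℝ) 1, τ z ≠ 0)
    (hy_eigen : ∀ z ∈ Ioo (-1 : ℝ) 1, gegenbauerForm α τ y z = lam * τ z * y z)
    (hw_eigen : ∀ z ∈ Ioo (-1 : ℝ) 1, gegenbauerForm α τ w z = mu * τ z * w z) :
    let ρ := weightedPrimitive (gegenbauerWeight α τ) (-1) w w
    let σ := weightedPrimitive (gegenbauerWeight α τ) (-1) y w
    ∀ z ∈ Ioo (-1 : ℝ) 1,
      gegenbauerForm α (confluentTau t ρ τ) (confluentEigenfunction t ρ σ w y) z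
        = lam * confluentTau t ρ τ z * confluentEigenfunction t ρ σ w y z := by
  intro ρ σ z hz
  have hsub : Ioo (-1 : ℝ) 1 ⊆ Ico (-1) 1 := Ioo_subset_Ico_self
  have hleft : (-1 : ℝ) ∈ Ico (-1 : ℝ) 1 := left_mem_Ico.2 (by norm_num)
  have hτ_left : ContinuousWithinAt τ (Ioi (-1)) (-1) :=
    (hτ.continuousOn (-1) hleft).mono_of_mem_nhdsWithin (Ico_mem_nhdsGT (by norm_num))
  have hPearson : ∀ u ∈ Ioo (-1 : ℝ) 1, IsPearsonWeightAt (fun v => 1 - v ^ 2)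
      (fun v => -(2 * α + 1) * v) τ (gegenbauerWeight α τ) u := fun u hu =>
    isPearsonWeightAt_gegenbauerWeight α hu
      ((hτ.contDiffAt (Ico_mem_nhds hu.1 hu.2)).differentiableAt two_ne_zero) (hτ0 u (hsub hu))
  have hint {f g : ℝ → ℝ} (hf : ContDiffOn ℝ 2 f (Ico (-1) 1))
      (hg : ContDiffOn ℝ 2 g (Ico (-1) 1)) (u : ℝ) (hu : u ∈ Ioo (-1 : ℝ) 1) :
      IntervalIntegrable (fun v => f v * g v * gegenbauerWeight α τ v) volume (-1) u :=
    intervalIntegrable_mul_gegenbauerWeight hα (hf.continuousOn.mul hg.continuousOn)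
      hτ.continuousOn hτ0 hu
  simp only [gegenbauerForm_eq_exceptionalForm] at hy_eigen hw_eigen ⊢
  exact exceptionalForm_confluentDarboux t (fun u _ => (hasDerivAt_one_sub_sq u).differentiableAt)
    (hτ.mono hsub) (fun u hu => hτ0 u (hsub hu)) (hy.mono hsub) (hw.mono hsub) hPearson
    hy_eigen hw_eigen (hint hw hw) (hint hy hw)
    (tendsto_weightedWronskian_gegenbauerWeight hα hτ_left (hτ0 (-1) hleft)
      (hy.of_le one_le_two) (hw.of_le one_le_two)) hz

/-- the confluent Darboux transform `π_{m;i}` satisfies the cleared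
eigenvalue equation of `T^{(α)}_{τ_m}` with the same eigenvalue `λ_i`. -/
theorem statement12 (α : ℝ) (hα : -1/2 < α) (τ πi πm : Polynomial ℝ)
    (lami lamm t : ℝ) (hne : lami ≠ lamm)
    (hτ0 : ∀ z ∈ Set.Icc (-1 : ℝ) 1, τ.eval z ≠ 0)
    (hi : (1 - X ^ 2) *
        (τ * derivative (derivative πi) - 2 * derivative τ * derivative πi
          + derivative (derivative τ) * πi)
      - C (2 * α + 1) * X * (τ * derivative πi)
      + C (2 * α - 1) * X * (derivative τ * πi)
      = C lami * (τ * πi))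
    (hm : (1 - X ^ 2) *
        (τ * derivative (derivative πm) - 2 * derivative τ * derivative πm
          + derivative (derivative τ) * πm)
      - C (2 * α + 1) * X * (τ * derivative πm)
      + C (2 * α - 1) * X * (derivative τ * πm)
      = C lamm * (τ * πm)) :
    ∀ z ∈ Set.Ioo (-1 : ℝ) 1,
      (1 - z ^ 2) *
          (tauCDT α τ πm t z * deriv (deriv (piCDT α τ πm πi t)) z
            - 2 * deriv (tauCDT α τ πm t) z * deriv (piCDT α τ πm πi t) z
            + deriv (deriv (tauCDT α τ πm t)) z * piCDT α τ πm πi t z)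
        - (2 * α + 1) * z * tauCDT α τ πm t z * deriv (piCDT α τ πm πi t) z
        + (2 * α - 1) * z * deriv (tauCDT α τ πm t) z * piCDT α τ πm πi t z
      = lami * tauCDT α τ πm t z * piCDT α τ πm πi t z :=
  statement12_general t hα (contDiff_polynomial_eval τ 2).contDiffOn
    (contDiff_polynomial_eval πi 2).contDiffOn (contDiff_polynomial_eval πm 2).contDiffOn
    (fun z hz => hτ0 z (Set.Ico_subset_Icc_self hz)) (fun z _ => gegenbauerForm_eval hi z)
    fun z _ => gegenbauerForm_eval hm z
end

section
/- Let I ⊆ ℝ be an open interval, W, π_i, π_j, π_m : I → ℝ continuous, and t ∈ ℝ. Let ρ_{ij}, ρ_{mi}, ρ_{mj}, ρ_{mm} : I → ℝ be differentiable with ρ_{ij}' = π_i·π_j·W, ρ_{mi}' = π_m·π_i·W, ρ_{mj}' = π_m·π_j·W, and ρ_{mm}' = π_m·π_m·W on I. Define π_{m;i} = (1 + t·ρ_{mm})·π_i - t·ρ_{mi}·π_m and π_{m;j} = (1 + t·ρ_{mm})·π_j - t·ρ_{mj}·π_m. Then at every z ∈ I with 1 + t·ρ_{mm}(z) ≠ 0,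 the function ρ_{m;ij} := ρ_{ij} - t·ρ_{mi}·ρ_{mj}/(1 + t·ρ_{mm}) is differentiable with ρ_{m;ij}'(z) = π_{m;i}(z)·π_{m;j}(z)·W(z)/(1 + t·ρ_{mm}(z))². -/
open Set

/-!
The function `ρ_{m;ij}` is the Schur complement of the lower right entry in the matrix
`[[ρ_{ij}, tρ_{mi}], [ρ_{mj}, 1 + tρ_{mm}]]`. The derivative of this matrix has rank one: it is
the column `(π_i, π_m)` times the row `(π_j W, tπ_m W)`. The derivative of a Schur complement
`f - uv/d` is obtained by applying the block elimination to the derivative of the matrix on both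
sides, so for a rank one derivative it is again a product; here its factors are `π_{m;i}` and
`π_{m;j} W`, each divided by `1 + tρ_{mm}`.
-/

section Transform

variable {X K : Type*} [Field K]

/-- The weight `W_m = W / (1 + tρ_{mm})²` of the confluent Darboux transformation at index `m`,
the analogue of `W` for the transformed eigenfunctions. It takes the junk value `0` where
`1 + tρ_{mm}` vanishes. -/
def confluentDarbouxWeight (t : K) (ρmm W : X → K) (x : X) : K :=
  W x / (1 + t * ρmm x) ^ 2

/-- The transformed eigenfunction `π_{m;a} = (1 + tρ_{mm})π_a - tρ_{ma}π_m` of the confluent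
Darboux transformation at index `m`, in the normalization that involves no division. -/
def confluentDarbouxEigenfunction (t : K) (ρmm πm ρma πa : X → K) (x : X) : K :=
  (1 + t * ρmm x) * πa x - t * ρma x * πm x

/-- The closed form `ρ_{m;ij} = ρ_{ij} - tρ_{mi}ρ_{mj} / (1 + tρ_{mm})` for the antiderivative of
`π_{m;i} π_{m;j} W_m`, meaningful where `1 + tρ_{mm}` does not vanish. -/
def confluentDarbouxAntideriv (t : K) (ρmm ρmi ρmj ρij : X → K) (x : X) : K :=
  ρij x - t * ρmi x * ρmj x / (1 + t * ρmm x)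

theorem confluentDarbouxEigenfunction_div {t : K} {ρmm : X → K} {x : X}
    (hx : 1 + t * ρmm x ≠ 0) (πm ρma πa : X → K) :
    confluentDarbouxEigenfunction t ρmm πm ρma πa x / (1 + t * ρmm x) =
      πa x - t * ρma x / (1 + t * ρmm x) * πm x := by
  rw [confluentDarbouxEigenfunction, sub_div, mul_div_cancel_left₀ _ hx, mul_div_right_comm]

end Transform

section Derivative

variable {𝕜 𝕜' : Type*} [NontriviallyNormedField 𝕜] [NontriviallyNormedField 𝕜']
  [NormedAlgebra 𝕜 𝕜'] {s : Set 𝕜} {z : 𝕜}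

theorem hasDerivWithinAt_schurComplement_of_rank_one {f u v d : 𝕜 → 𝕜'} {p₁ p₂ q₁ q₂ : 𝕜'}
    (hf : HasDerivWithinAt f (p₁ * q₁) s z) (hu : HasDerivWithinAt u (p₁ * q₂) s z)
    (hv : HasDerivWithinAt v (p₂ * q₁) s z) (hd : HasDerivWithinAt d (p₂ * q₂) s z)
    (hz : d z ≠ 0) :
    HasDerivWithinAt (fun x => f x - u x * v x / d x)
      ((p₁ - u z / d z * p₂) * (q₁ - v z / d z * q₂)) s z := by
  refine (hf.fun_sub ((hu.fun_mul hv).fun_div hd hz)).congr_deriv ?_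
  field_simp
  ring

theorem statement13_general {W πi πj πm ρij ρmi ρmj ρmm : 𝕜 → 𝕜'} {t : 𝕜'}
    (hρij : HasDerivWithinAt ρij (πi z * πj z * W z) s z)
    (hρmi : HasDerivWithinAt ρmi (πm z * πi z * W z) s z)
    (hρmj : HasDerivWithinAt ρmj (πm z * πj z * W z) s z)
    (hρmm : HasDerivWithinAt ρmm (πm z * πm z * W z) s z)
    (hz : 1 + t * ρmm z ≠ 0) :
    HasDerivWithinAt (confluentDarbouxAntideriv t ρmm ρmi ρmj ρij)
      (confluentDarbouxEigenfunction t ρmm πm ρmi πi z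
        * confluentDarbouxEigenfunction t ρmm πm ρmj πj z
        * confluentDarbouxWeight t ρmm W z) s z := by
  have hf : HasDerivWithinAt ρij (πi z * (πj z * W z)) s z :=
    hρij.congr_deriv (mul_assoc _ _ _)
  have hu : HasDerivWithinAt (fun x => t * ρmi x) (πi z * (t * πm z * W z)) s z :=
    (hρmi.const_mul t).congr_deriv (by ring)
  have hv : HasDerivWithinAt ρmj (πm z * (πj z * W z)) s z :=
    hρmj.congr_deriv (mul_assoc _ _ _)
  have hd : HasDerivWithinAt (fun x => 1 + t * ρmm x) (πm z * (t * πm z * W z)) s z :=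
    ((hρmm.const_mul t).const_add 1).congr_deriv (by ring)
  refine (hasDerivWithinAt_schurComplement_of_rank_one hf hu hv hd hz).congr_deriv ?_
  calc
    (πi z - t * ρmi z / (1 + t * ρmm z) * πm z)
          * (πj z * W z - ρmj z / (1 + t * ρmm z) * (t * πm z * W z))
        = (πi z - t * ρmi z / (1 + t * ρmm z) * πm z)
          * (πj z - t * ρmj z / (1 + t * ρmm z) * πm z) * W z := by ring
    _ = confluentDarbouxEigenfunction t ρmm πm ρmi πi z / (1 + t * ρmm z)
          * (confluentDarbouxEigenfunction t ρmm πm ρmj πj z / (1 + t * ρmm z)) * W z := by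
      rw [confluentDarbouxEigenfunction_div hz, confluentDarbouxEigenfunction_div hz]
    _ = confluentDarbouxEigenfunction t ρmm πm ρmi πi z
          * confluentDarbouxEigenfunction t ρmm πm ρmj πj z
          * confluentDarbouxWeight t ρmm W z := by
      rw [confluentDarbouxWeight, div_mul_div_comm, ← sq, div_mul_eq_mul_div, mul_div_assoc]

end Derivative

/-- closed form for the derivative of
`ρ_{m;ij} = ρ_{ij} - tρ_{mi}ρ_{mj}/(1 + tρ_{mm})`:
wherever `1 + tρ_{mm} ≠ 0`, one has `ρ_{m;ij}' = π_{m;i}π_{m;j}W/(1 + tρ_{mm})²`,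
where `π_{m;a} = (1 + tρ_{mm})π_a - tρ_{ma}π_m`. -/
theorem statement13 (a b : ℝ) (hab : a < b)
    (W πi πj πm ρij ρmi ρmj ρmm : ℝ → ℝ) (t : ℝ)
    (hW : ContinuousOn W (Ioo a b)) (hπi : ContinuousOn πi (Ioo a b))
    (hπj : ContinuousOn πj (Ioo a b)) (hπm : ContinuousOn πm (Ioo a b))
    (hρij : ∀ z ∈ Ioo a b, HasDerivAt ρij (πi z * πj z * W z) z)
    (hρmi : ∀ z ∈ Ioo a b, HasDerivAt ρmi (πm z * πi z * W z) z)
    (hρmj : ∀ z ∈ Ioo a b, HasDerivAt ρmj (πm z * πj z * W z) z)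
    (hρmm : ∀ z ∈ Ioo a b, HasDerivAt ρmm (πm z * πm z * W z) z) :
    ∀ z ∈ Ioo a b, 1 + t * ρmm z ≠ 0 →
      HasDerivAt (fun x => ρij x - t * ρmi x * ρmj x / (1 + t * ρmm x))
        (((1 + t * ρmm z) * πi z - t * ρmi z * πm z)
          * ((1 + t * ρmm z) * πj z - t * ρmj z * πm z)
          * W z / (1 + t * ρmm z) ^ 2) z := by
  intro z hz hne
  simp only [← hasDerivWithinAt_univ] at hρij hρmi hρmj hρmm ⊢
  exact (statement13_general (hρij z hz) (hρmi z hz) (hρmj z hz) (hρmm z hz) hne).congr_deriv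
    (mul_div_assoc _ _ _).symm
end

section
/- Let ℓ ∈ ℕ and α = ℓ + 1/2, n ∈ ℕ, m = (m₁,…,mₙ) ∈ ℕⁿ, and t = (t₁,…,tₙ) ∈ ℝⁿ. Let C^{(α)}_i denote the classical Gegenbauer polynomial, and define ρ_{ij}(z) = ∫_{-1}^{z} C^{(α)}_i(u)·C^{(α)}_j(u)·(1-u²)^{ℓ} du. Let R_m(z) be the n×n matrix with entries [R_m(z)]_{kℓ'} = δ_{kℓ'} + t_{ℓ'}·ρ_{m_k m_{ℓ'}}(z), and set τ_m(z) = det R_m(z). For i ∈ ℕ, let μ = (m₁,…,mₙ,i), let R_{(m,i)}(z) be the (n+1)×(n+1) matrix with entries [R_{(m,i)}(z)]_{kℓ'} = δ_{kℓ'} + s_{ℓ'}·ρ_{μ_k μ_{ℓ'}}(z) where s_{ℓ'} = t_{ℓ'} for ℓ' ≤ n and s_{n+1} = 0, and define C_{m;i}(z) = Σ_{j=1}^{n+1} [adj R_{(m,i)}(z)]_{n+1,j}·C^{(α)}_{μ_j}(z), where adj denotes the adjugate matrix. Then for every i ∈ ℕ and every z ∈ ℝ, writing C = C_{m;i} and λ_i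 = -i·(2α + i): (1-z²)·(τ_m·C'' - 2·τ_m'·C' + τ_m''·C) - (2α+1)·z·τ_m·C' + (2α-1)·z·τ_m'·C = λ_i·τ_m·C. -/
/-- The classical Gegenbauer polynomial
`C^{(α)}_i(z) = ∑_{k=0}^{⌊i/2⌋} (-1)^k Γ(i-k+α)/(Γ(α)k!(i-2k)!) (2z)^{i-2k}`. -/
noncomputable def gegenC (α : ℝ) (i : ℕ) (z : ℝ) : ℝ :=
  ∑ k ∈ Finset.range (i / 2 + 1),
    (-1 : ℝ) ^ k * Real.Gamma ((i : ℝ) - k + α)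
      / (Real.Gamma α * (Nat.factorial k) * (Nat.factorial (i - 2 * k)))
      * (2 * z) ^ (i - 2 * k)

/-- `ρ_{ij}(z) = ∫_{-1}^z C^{(α)}_i C^{(α)}_j (1-u²)^ℓ du`, for `α = ℓ + 1/2`. -/
noncomputable def rhoGegen (ℓ : ℕ) (i j : ℕ) (z : ℝ) : ℝ :=
  ∫ u in (-1 : ℝ)..z,
    gegenC ((ℓ : ℝ) + 1/2) i u * gegenC ((ℓ : ℝ) + 1/2) j u * (1 - u ^ 2) ^ ℓ

/-- The `n × n` matrix `R_m(z)` with entries `δ_{kl} + t_l ρ_{m_k m_l}(z)`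
(indices `1, …, n` realized as `k.1+1` for `k : Fin n`). -/
noncomputable def rMat (ℓ n : ℕ) (m : ℕ → ℕ) (t : ℕ → ℝ) (z : ℝ) :
    Matrix (Fin n) (Fin n) ℝ :=
  Matrix.of fun k l =>
    (if k = l then (1 : ℝ) else 0) + t (l.1 + 1) * rhoGegen ℓ (m (k.1 + 1)) (m (l.1 + 1)) z

/-- The τ-function `τ_m(z) = det R_m(z)`. -/
noncomputable def tauMat (ℓ n : ℕ) (m : ℕ → ℕ) (t : ℕ → ℝ) (z : ℝ) : ℝ :=
  (rMat ℓ n m t z).det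

/-- The exceptional Gegenbauer polynomial of the second kind
`C_{m;i}(z) = ∑_{j=1}^{n+1} [adj R_{(m,i)}(z)]_{n+1,j} C^{(α)}_{μ_j}(z)`,
where `μ = (m₁,…,mₙ,i)` and `s = (t₁,…,tₙ,0)`. -/
noncomputable def xGegenC (ℓ n : ℕ) (m : ℕ → ℕ) (t : ℕ → ℝ) (i : ℕ) (z : ℝ) : ℝ :=
  ∑ j : Fin (n + 1),
    (rMat ℓ (n + 1) (fun a => if a ≤ n then m a else i)
        (fun a => if a ≤ n then t a else 0) z).adjugate (Fin.last n) j
      * gegenC ((ℓ : ℝ) + 1/2) (if j.1 + 1 ≤ n then m (j.1 + 1) else i) z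

/-!
The argument works for the eigenfunctions `y_k` of any second order operator `p y'' + q y'` with
weight `w` satisfying `(p w)' = q w`. Write `v` for the vector of the selected eigenfunctions, `G`
for their incomplete Gram matrix, so that `G' = w v vᵀ`, and `Λ` for the diagonal matrix of their
eigenvalues. Integrating the Wronskian identity gives `[Λ, G] = p w (v' vᵀ - v v'ᵀ)`, hence a
commutator of rank two with the symmetric matrix `M = T (1 + G T)⁻¹`, `T = diag t`.

Where `τ = det (1 + G T)` does not vanish, put `⟨x, y⟩ = xᵀ M y`. Then `τ' = τ w ⟨v, v⟩`, and by
expanding a bordered determinant the exceptional function is `C = τ F` with `F = y - ⟨r, v⟩`, where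
`r` is the vector of incomplete inner products of `y` with the selected eigenfunctions. The point is
that `E = y' - ⟨r, v'⟩` satisfies `C' = τ E`, while the commutator identity expresses `p E'` through
`E` and `F`; the equation for `C` follows by differentiating once more. At a zero of `τ` replace `t`
by `s t`: both sides are continuous in `s`, and only finitely many `s` are excluded.
-/

section MatrixResolvent

open Matrix

variable {ι R : Type*} [Fintype ι] [DecidableEq ι] [CommRing R]

/-- The matrix `M = T (1 + G T)⁻¹`, i.e. `M⁻¹ = T⁻¹ + G` for invertible `T`; this form makes sense
for singular `T`. It is a junk value unless `1 + G T` is invertible. -/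
noncomputable def resolventMatrix (T G : Matrix ι ι R) : Matrix ι ι R :=
  T * (1 + G * T)⁻¹

variable {T G : Matrix ι ι R}

theorem resolventMatrix_mul_one_add (h : IsUnit (1 + G * T).det) :
    resolventMatrix T G * (1 + G * T) = T :=
  nonsing_inv_mul_cancel_right _ _ h

theorem one_add_mul_resolventMatrix (h : IsUnit (1 + G * T).det) :
    (1 + T * G) * resolventMatrix T G = T := by
  have hcomm : (1 + T * G) * T = T * (1 + G * T) := by noncomm_ring
  rw [resolventMatrix, ← mul_assoc, hcomm, mul_nonsing_inv_cancel_right _ _ h]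

theorem isSymm_resolventMatrix (hT : T.IsSymm) (hG : G.IsSymm) (h : IsUnit (1 + G * T).det) :
    (resolventMatrix T G).IsSymm := by
  have h' : IsUnit (1 + T * G).det := by rwa [det_one_add_mul_comm]
  have htranspose := congrArg transpose (resolventMatrix_mul_one_add h)
  rw [transpose_mul, transpose_add, transpose_mul, transpose_one, hT.eq, hG.eq] at htranspose
  exact ((isUnit_iff_isUnit_det _).2 h').mul_left_cancel
    (htranspose.trans (one_add_mul_resolventMatrix h).symm)

theorem commutator_resolventMatrix {D : Matrix ι ι R} (hD : Commute D T)
    (h : IsUnit (1 + G * T).det) :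
    D * resolventMatrix T G - resolventMatrix T G * D
      = -(resolventMatrix T G * (D * G - G * D) * resolventMatrix T G) := by
  have hL : IsUnit (1 + T * G) := by rwa [isUnit_iff_isUnit_det, det_one_add_mul_comm]
  have hR : IsUnit (1 + G * T) := (isUnit_iff_isUnit_det _).2 h
  -- Multiplying by `1 + T G` on the left and by `1 + G T` on the right clears both resolvents.
  refine hL.mul_left_cancel (hR.mul_right_cancel ?_)
  have hML := one_add_mul_resolventMatrix h
  have hMR := resolventMatrix_mul_one_add h
  set M := resolventMatrix T G
  calc (1 + T * G) * (D * M - M * D) * (1 + G * T)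
      = (1 + T * G) * D * (M * (1 + G * T)) - (1 + T * G) * M * D * (1 + G * T) := by
        noncomm_ring
    _ = D * T - T * D - T * (D * G - G * D) * T := by
        rw [hML, hMR]
        noncomm_ring
    _ = -((1 + T * G) * M * (D * G - G * D) * (M * (1 + G * T))) := by
        rw [hML, hMR, hD.eq, sub_self, zero_sub]
    _ = (1 + T * G) * -(M * (D * G - G * D) * M) * (1 + G * T) := by noncomm_ring

theorem det_fromBlocks_replicateCol_replicateRow {A : Matrix ι ι R} (hA : IsUnit A.det)
    (u v : ι → R) (c : R) :
    (fromBlocks A (replicateCol (Fin 1) u) (replicateRow (Fin 1) v) (of fun _ _ => c)).det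
      = A.det * (c - v ⬝ᵥ A⁻¹ *ᵥ u) := by
  let := invertibleOfIsUnitDet A hA
  rw [det_fromBlocks₁₁, det_fin_one, invOf_eq_nonsing_inv, dotProduct_mulVec]
  rfl

open Polynomial in
theorem finite_setOf_det_one_add_smul_eq_zero [IsDomain R] (A : Matrix ι ι R) :
    {s : R | (1 + s • A).det = 0}.Finite := by
  set P : R[X] := (1 + (X : R[X]) • A.map C).det with hP
  have hev (s : R) : P.eval s = (1 + s • A).det := by
    rw [hP, ← coe_evalRingHom, RingHom.map_det]
    congr 1
    ext k l
    simp [one_apply, apply_ite, mul_comm s]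
  have hP0 : P ≠ 0 := fun h => by simpa [h] using hev 0
  exact (finite_setOfPred_isRoot hP0).subset fun s hs => (hev s).trans hs

end MatrixResolvent

section MatrixCalculus

open Matrix

variable {ι 𝕜 : Type*} [NontriviallyNormedField 𝕜]

theorem hasDerivAt_matrix [Finite ι] {A : 𝕜 → Matrix ι ι 𝕜} {A' : Matrix ι ι 𝕜} {z : 𝕜} :
    HasDerivAt A A' z ↔ ∀ k l, HasDerivAt (fun x => A x k l) (A' k l) z := by
  have := Fintype.ofFinite ι
  exact (hasDerivAt_pi (φ := A) (φ' := A')).trans (forall_congr' fun _ => hasDerivAt_pi)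

variable [Fintype ι]

theorem hasDerivAt_dotProduct_mulVec {M : 𝕜 → Matrix ι ι 𝕜} {M' : Matrix ι ι 𝕜}
    {x y : 𝕜 → ι → 𝕜} {x' y' : ι → 𝕜} {z : 𝕜}
    (hM : HasDerivAt M M' z) (hx : HasDerivAt x x' z) (hy : HasDerivAt y y' z) :
    HasDerivAt (fun s => x s ⬝ᵥ M s *ᵥ y s)
      (x' ⬝ᵥ M z *ᵥ y z + x z ⬝ᵥ M' *ᵥ y z + x z ⬝ᵥ M z *ᵥ y') z := by
  refine (HasDerivAt.fun_sum fun k _ => (hasDerivAt_pi.1 hx k).fun_mul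
    (HasDerivAt.fun_sum fun l _ =>
      (hasDerivAt_matrix.1 hM k l).fun_mul (hasDerivAt_pi.1 hy l))).congr_deriv ?_
  simp only [dotProduct, mulVec, Finset.sum_add_distrib, mul_add, add_assoc]

variable [DecidableEq ι]

theorem hasDerivAt_det {A : 𝕜 → Matrix ι ι 𝕜} {A' : Matrix ι ι 𝕜} {z : 𝕜}
    (hA : HasDerivAt A A' z) :
    HasDerivAt (fun x => (A x).det) (A' * (A z).adjugate).trace z := by
  let detRow : ContinuousMultilinearMap 𝕜 (fun _ : ι => ι → 𝕜) 𝕜 :=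
    ⟨(detRowAlternating (R := 𝕜) (n := ι)).toMultilinearMap, continuous_id.matrix_det⟩
  refine ((detRow.hasFDerivAt (A z)).comp_hasDerivAt z hA).congr_deriv ?_
  refine (detRow.linearDeriv_apply (A z) A').trans (Finset.sum_congr rfl fun k _ => ?_)
  change ((A z).updateRow k (A' k)).det = (A' * (A z).adjugate) k k
  rw [← cramer_transpose_apply, cramer_eq_adjugate_mulVec, ← adjugate_transpose, mulVec_transpose]
  rfl

theorem hasDerivAt_det_of_isUnit {A : 𝕜 → Matrix ι ι 𝕜} {A' : Matrix ι ι 𝕜} {z : 𝕜}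
    (hA : HasDerivAt A A' z) (hz : IsUnit (A z).det) :
    HasDerivAt (fun x => (A x).det) ((A z).det * (A' * (A z)⁻¹).trace) z := by
  refine (hasDerivAt_det hA).congr_deriv ?_
  rw [inv_def, Matrix.mul_smul, trace_smul, smul_eq_mul, Ring.mul_inverse_cancel_left _ _ hz]

open scoped Matrix.Norms.Operator in
theorem hasDerivAt_matrix_inv [CompleteSpace 𝕜] {A : 𝕜 → Matrix ι ι 𝕜} {A' : Matrix ι ι 𝕜} {z : 𝕜}
    (hA : HasDerivAt A A' z) (hz : IsUnit (A z).det) :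
    HasDerivAt (fun x => (A x)⁻¹) (-((A z)⁻¹ * A' * (A z)⁻¹)) z := by
  obtain ⟨u, hu⟩ := (isUnit_iff_isUnit_det _).2 hz
  have : @CompleteSpace (Matrix ι ι 𝕜) (Matrix.linftyOpNormedRing).toUniformSpace :=
    FiniteDimensional.complete 𝕜 _
  have hring := hasFDerivAt_ringInverse (𝕜 := 𝕜) u
  rw [hu] at hring
  have hinv : (A z)⁻¹ = ↑u⁻¹ := by rw [← hu, coe_units_inv]
  have hfun : (fun x => (A x)⁻¹) = Ring.inverse ∘ A :=
    funext fun _ => nonsing_inv_eq_ringInverse _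
  rw [hinv, hfun]
  exact hring.comp_hasDerivAt z hA

open scoped Matrix.Norms.Operator in
theorem hasDerivAt_resolventMatrix [CompleteSpace 𝕜] {T : Matrix ι ι 𝕜} {G : 𝕜 → Matrix ι ι 𝕜}
    {G' : Matrix ι ι 𝕜} {z : 𝕜} (hG : HasDerivAt G G' z) (hz : IsUnit (1 + G z * T).det) :
    HasDerivAt (fun x => resolventMatrix T (G x))
      (-(resolventMatrix T (G z) * G' * resolventMatrix T (G z))) z := by
  refine ((hasDerivAt_matrix_inv ((hG.mul_const T).const_add 1) hz).const_mul T).congr_deriv ?_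
  simp only [resolventMatrix]
  noncomm_ring

open scoped Matrix.Norms.Operator in
theorem hasDerivAt_det_one_add_mul {T : Matrix ι ι 𝕜} {G : 𝕜 → Matrix ι ι 𝕜}
    {G' : Matrix ι ι 𝕜} {z : 𝕜} (hG : HasDerivAt G G' z) (hz : IsUnit (1 + G z * T).det) :
    HasDerivAt (fun x => (1 + G x * T).det)
      ((1 + G z * T).det * (G' * resolventMatrix T (G z)).trace) z := by
  rw [resolventMatrix, ← mul_assoc]
  exact hasDerivAt_det_of_isUnit ((hG.mul_const T).const_add 1) hz

theorem contDiff_det {E : Type*} [NormedAddCommGroup E] [NormedSpace 𝕜 E] {n : WithTop ℕ∞}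
    {A : E → Matrix ι ι 𝕜} (hA : ∀ k l, ContDiff 𝕜 n fun x => A x k l) :
    ContDiff 𝕜 n fun x => (A x).det := by
  simp only [det_apply']
  exact .sum fun σ _ => contDiff_const.mul (contDiff_prod fun k _ => hA (σ k) k)

end MatrixCalculus

theorem contDiff_uncurry_deriv {𝕜 : Type*} [NontriviallyNormedField 𝕜] {f : 𝕜 → 𝕜 → 𝕜}
    {n : WithTop ℕ∞} (hf : ContDiff 𝕜 (n + 1) (Function.uncurry f)) :
    ContDiff 𝕜 n (Function.uncurry fun s => deriv (f s)) := by
  have hf' : ContDiff 𝕜 (n + 1) (Function.uncurry fun x : 𝕜 × 𝕜 => f x.1) :=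
    hf.comp ((contDiff_fst.comp contDiff_fst).prodMk contDiff_snd)
  exact hf'.fderiv_apply contDiff_snd (contDiff_const (c := 1)) le_rfl

/-- A family of solutions of the eigenvalue equations `p y'' + q y' = λ y` of one second order
operator on the real line, in the self-adjoint form given by a weight `w` (Pearson's equation
`(p w)' = q w`), with a base point at which the boundary term `p w` vanishes. -/
structure SturmLiouvilleFamily (κ : Type*) where
  p : ℝ → ℝ
  q : ℝ → ℝ
  w : ℝ → ℝ
  base : ℝ
  eigenfun : κ → ℝ → ℝ
  eigenval : κ → ℝ
  differentiable_p : Differentiable ℝ p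
  contDiff_w : ContDiff ℝ 1 w
  contDiff_eigenfun : ∀ k, ContDiff ℝ 2 (eigenfun k)
  p_mul_w_base : p base * w base = 0
  pearson : ∀ z, deriv p z * w z + p z * deriv w z = q z * w z
  eigenfun_ode : ∀ k z,
    p z * deriv (deriv (eigenfun k)) z + q z * deriv (eigenfun k) z = eigenval k * eigenfun k z

namespace SturmLiouvilleFamily

open Matrix Topology

variable {κ : Type*} (S : SturmLiouvilleFamily κ)

section Gram

theorem hasDerivAt_w (z : ℝ) : HasDerivAt S.w (deriv S.w z) z :=
  (S.contDiff_w.differentiable one_ne_zero).differentiableAt.hasDerivAt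

theorem hasDerivAt_eigenfun (k : κ) (z : ℝ) :
    HasDerivAt (S.eigenfun k) (deriv (S.eigenfun k) z) z :=
  ((S.contDiff_eigenfun k).differentiable two_ne_zero).differentiableAt.hasDerivAt

theorem hasDerivAt_deriv_eigenfun (k : κ) (z : ℝ) :
    HasDerivAt (deriv (S.eigenfun k)) (deriv (deriv (S.eigenfun k)) z) z :=
  ((S.contDiff_eigenfun k).differentiable_deriv_two z).hasDerivAt

/-- The incomplete inner product of two eigenfunctions, taken from the base point to `z`. -/
noncomputable def gram (j k : κ) (z : ℝ) : ℝ :=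
  ∫ u in S.base..z, S.eigenfun j u * S.eigenfun k u * S.w u

theorem gram_comm (j k : κ) (z : ℝ) : S.gram j k z = S.gram k j z := by
  simp only [gram, mul_comm (S.eigenfun j _)]

theorem contDiff_gram_integrand (j k : κ) :
    ContDiff ℝ 1 fun u => S.eigenfun j u * S.eigenfun k u * S.w u :=
  (((S.contDiff_eigenfun j).of_le one_le_two).mul
    ((S.contDiff_eigenfun k).of_le one_le_two)).mul S.contDiff_w

theorem hasDerivAt_gram (j k : κ) (z : ℝ) :
    HasDerivAt (S.gram j k) (S.eigenfun j z * S.eigenfun k z * S.w z) z :=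
  (S.contDiff_gram_integrand j k).continuous.integral_hasStrictDerivAt S.base z |>.hasDerivAt

theorem contDiff_gram (j k : κ) : ContDiff ℝ 2 (S.gram j k) := by
  rw [← one_add_one_eq_two, contDiff_succ_iff_deriv]
  refine ⟨fun z => (S.hasDerivAt_gram j k z).differentiableAt, by simp, ?_⟩
  rw [funext fun z => (S.hasDerivAt_gram j k z).deriv]
  exact S.contDiff_gram_integrand j k

theorem wronskian_eq_eigenval_sub_mul_gram (j k : κ) (z : ℝ) :
    S.p z * S.w z * (deriv (S.eigenfun j) z * S.eigenfun k z
        - S.eigenfun j z * deriv (S.eigenfun k) z)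
      = (S.eigenval j - S.eigenval k) * S.gram j k z := by
  set W : ℝ → ℝ := fun u => S.p u * S.w u *
    (deriv (S.eigenfun j) u * S.eigenfun k u - S.eigenfun j u * deriv (S.eigenfun k) u) with hW
  have hW' (u : ℝ) : HasDerivAt W
      ((S.eigenval j - S.eigenval k) * (S.eigenfun j u * S.eigenfun k u * S.w u)) u := by
    refine (((S.differentiable_p u).hasDerivAt.fun_mul (S.hasDerivAt_w u)).fun_mul
      (((S.hasDerivAt_deriv_eigenfun j u).fun_mul (S.hasDerivAt_eigenfun k u)).fun_sub
        ((S.hasDerivAt_eigenfun j u).fun_mul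
          (S.hasDerivAt_deriv_eigenfun k u)))).congr_deriv ?_
    linear_combination
      (deriv (S.eigenfun j) u * S.eigenfun k u - S.eigenfun j u * deriv (S.eigenfun k) u)
          * S.pearson u
        + S.w u * S.eigenfun k u * S.eigenfun_ode j u
        - S.w u * S.eigenfun j u * S.eigenfun_ode k u
  have hbase : W S.base = 0 := by simp only [hW, S.p_mul_w_base, zero_mul]
  have hftc := intervalIntegral.integral_eq_sub_of_hasDerivAt (a := S.base) (b := z)
    (fun u _ => hW' u)
    (((S.contDiff_gram_integrand j k).continuous.const_mul _).intervalIntegrable _ _)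
  rw [intervalIntegral.integral_const_mul, hbase, sub_zero] at hftc
  exact hftc.symm

end Gram

section Pairing

variable {ι : Type*} (μ : ι → κ)

/-- The vector of the eigenfunctions selected by `μ`, at the point `z`. -/
def eigenvec (z : ℝ) : ι → ℝ := fun k => S.eigenfun (μ k) z

/-- The derivative of `eigenvec`. -/
noncomputable def eigenvecDeriv (z : ℝ) : ι → ℝ := fun k => deriv (S.eigenfun (μ k)) z

/-- The incomplete inner products of the `i`-th eigenfunction with those selected by `μ`. -/
noncomputable def gramVec (i : κ) (z : ℝ) : ι → ℝ := fun k => S.gram i (μ k) z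

/-- The matrix of the incomplete inner products of the eigenfunctions selected by `μ`. -/
noncomputable def gramMatrix (z : ℝ) : Matrix ι ι ℝ := of fun k l => S.gram (μ k) (μ l) z

/-- The eigenvalues of the eigenfunctions selected by `μ`. -/
def eigenvals : ι → ℝ := fun k => S.eigenval (μ k)

theorem isSymm_gramMatrix (z : ℝ) : (S.gramMatrix μ z).IsSymm :=
  Matrix.ext fun k l => S.gram_comm (μ l) (μ k) z

theorem hasDerivAt_eigenvec (z : ℝ) : HasDerivAt (S.eigenvec μ) (S.eigenvecDeriv μ z) z :=
  hasDerivAt_pi.2 fun k => S.hasDerivAt_eigenfun (μ k) z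

theorem hasDerivAt_eigenvecDeriv (z : ℝ) :
    HasDerivAt (S.eigenvecDeriv μ) (fun k => deriv (deriv (S.eigenfun (μ k))) z) z :=
  hasDerivAt_pi.2 fun k => S.hasDerivAt_deriv_eigenfun (μ k) z

theorem eigenvec_ode (z : ℝ) :
    S.p z • (fun k => deriv (deriv (S.eigenfun (μ k))) z) + S.q z • S.eigenvecDeriv μ z
      = S.eigenvals μ * S.eigenvec μ z :=
  funext fun k => S.eigenfun_ode (μ k) z

theorem hasDerivAt_gramVec (i : κ) (z : ℝ) :
    HasDerivAt (S.gramVec μ i) ((S.w z * S.eigenfun i z) • S.eigenvec μ z) z :=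
  hasDerivAt_pi.2 fun k => (S.hasDerivAt_gram i (μ k) z).congr_deriv <| by
    simp only [eigenvec, Pi.smul_apply, smul_eq_mul]
    ring

theorem eigenval_smul_gramVec_sub (i : κ) (z : ℝ) :
    S.eigenval i • S.gramVec μ i z - S.eigenvals μ * S.gramVec μ i z
      = (S.p z * S.w z * deriv (S.eigenfun i) z) • S.eigenvec μ z
        - (S.p z * S.w z * S.eigenfun i z) • S.eigenvecDeriv μ z := by
  ext k
  simp only [Pi.sub_apply, Pi.smul_apply, Pi.mul_apply, smul_eq_mul, eigenvec, eigenvecDeriv,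
    gramVec, eigenvals]
  linear_combination -S.wronskian_eq_eigenval_sub_mul_gram i (μ k) z

theorem hasDerivAt_gramMatrix [Finite ι] (z : ℝ) :
    HasDerivAt (S.gramMatrix μ)
      (S.w z • vecMulVec (S.eigenvec μ z) (S.eigenvec μ z)) z :=
  hasDerivAt_matrix.2 fun k l =>
    (S.hasDerivAt_gram (μ k) (μ l) z).congr_deriv (mul_comm _ _)

variable [Fintype ι] [DecidableEq ι] (t : ι → ℝ)

/-- The τ-function `det (1 + G T)`, where `G` is the Gram matrix and `T = diag t`. -/
noncomputable def tau (z : ℝ) : ℝ := (1 + S.gramMatrix μ z * diagonal t).det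

/-- The bilinear form `⟨x, y⟩ = xᵀ T (1 + G T)⁻¹ y`, where `G` is the Gram matrix and
`T = diag t`. It is meaningful only where the τ-function does not vanish. -/
noncomputable def pairing (z : ℝ) : LinearMap.BilinForm ℝ (ι → ℝ) :=
  toLinearMap₂' ℝ (resolventMatrix (diagonal t) (S.gramMatrix μ z))

variable {S μ t}

theorem pairing_apply (z : ℝ) (x y : ι → ℝ) :
    S.pairing μ t z x y = x ⬝ᵥ resolventMatrix (diagonal t) (S.gramMatrix μ z) *ᵥ y :=
  toLinearMap₂'_apply' ..

theorem pairing_comm {z : ℝ} (hz : S.tau μ t z ≠ 0) (x y : ι → ℝ) :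
    S.pairing μ t z x y = S.pairing μ t z y x := by
  have hsymm := isSymm_resolventMatrix (isSymm_diagonal t) (S.isSymm_gramMatrix μ z)
    (isUnit_iff_ne_zero.2 hz)
  rw [pairing_apply, pairing_apply, dotProduct_mulVec, ← mulVec_transpose, hsymm.eq,
    dotProduct_comm]

theorem hasDerivAt_tau {z : ℝ} (hz : S.tau μ t z ≠ 0) :
    HasDerivAt (S.tau μ t)
      (S.tau μ t z * (S.w z * S.pairing μ t z (S.eigenvec μ z) (S.eigenvec μ z))) z := by
  refine (hasDerivAt_det_one_add_mul (S.hasDerivAt_gramMatrix μ z)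
    (isUnit_iff_ne_zero.2 hz)).congr_deriv ?_
  rw [smul_mul, trace_smul, vecMulVec_mul, trace_vecMulVec, dotProduct_comm, ← dotProduct_mulVec,
    ← pairing_apply]
  rfl

theorem hasDerivAt_pairing {z : ℝ} (hz : S.tau μ t z ≠ 0) {x y : ℝ → ι → ℝ} {x' y' : ι → ℝ}
    (hx : HasDerivAt x x' z) (hy : HasDerivAt y y' z) :
    HasDerivAt (fun u => S.pairing μ t u (x u) (y u))
      (S.pairing μ t z x' (y z) + S.pairing μ t z (x z) y'
        - S.w z * S.pairing μ t z (x z) (S.eigenvec μ z)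
          * S.pairing μ t z (S.eigenvec μ z) (y z)) z := by
  simp only [pairing_apply]
  refine (hasDerivAt_dotProduct_mulVec (hasDerivAt_resolventMatrix (S.hasDerivAt_gramMatrix μ z)
    (isUnit_iff_ne_zero.2 hz)) hx hy).congr_deriv ?_
  set M := resolventMatrix (diagonal t) (S.gramMatrix μ z)
  set v := S.eigenvec μ z
  have hM : x z ⬝ᵥ -(M * S.w z • vecMulVec v v * M) *ᵥ y z
      = -(S.w z * (x z ⬝ᵥ M *ᵥ v) * (v ⬝ᵥ M *ᵥ y z)) := by
    rw [Matrix.mul_smul, Matrix.smul_mul, neg_mulVec, smul_mulVec, mul_vecMulVec, vecMulVec_mul,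
      vecMulVec_mulVec, dotProduct_neg, dotProduct_smul, dotProduct_smul, ← dotProduct_mulVec]
    simp only [smul_eq_mul, MulOpposite.smul_eq_mul_unop, MulOpposite.unop_op]
    ring
  rw [hM]
  ring

theorem commutator_eigenvals_gramMatrix (z : ℝ) :
    diagonal (S.eigenvals μ) * S.gramMatrix μ z - S.gramMatrix μ z * diagonal (S.eigenvals μ)
      = (S.p z * S.w z) • (vecMulVec (S.eigenvecDeriv μ z) (S.eigenvec μ z)
        - vecMulVec (S.eigenvec μ z) (S.eigenvecDeriv μ z)) := by
  ext k l
  simp only [Matrix.sub_apply, Matrix.smul_apply, diagonal_mul, mul_diagonal, vecMulVec_apply,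
    smul_eq_mul, eigenvals, gramMatrix, of_apply, eigenvec, eigenvecDeriv]
  linear_combination -S.wronskian_eq_eigenval_sub_mul_gram (μ k) (μ l) z

theorem pairing_eigenvals_mul_sub {z : ℝ} (hz : S.tau μ t z ≠ 0) (x y : ι → ℝ) :
    S.pairing μ t z (S.eigenvals μ * x) y - S.pairing μ t z x (S.eigenvals μ * y)
      = -(S.p z * S.w z
        * (S.pairing μ t z x (S.eigenvecDeriv μ z) * S.pairing μ t z (S.eigenvec μ z) y
          - S.pairing μ t z x (S.eigenvec μ z) * S.pairing μ t z (S.eigenvecDeriv μ z) y)) := by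
  have hcomm := commutator_resolventMatrix (commute_diagonal (S.eigenvals μ) t)
    (isUnit_iff_ne_zero.2 hz)
  rw [commutator_eigenvals_gramMatrix] at hcomm
  have hdiag (u : ι → ℝ) : S.eigenvals μ * u = diagonal (S.eigenvals μ) *ᵥ u :=
    funext fun k => (mulVec_diagonal _ _ _).symm
  simp only [pairing_apply, hdiag]
  set M := resolventMatrix (diagonal t) (S.gramMatrix μ z)
  calc (diagonal (S.eigenvals μ) *ᵥ x) ⬝ᵥ M *ᵥ y - x ⬝ᵥ M *ᵥ diagonal (S.eigenvals μ) *ᵥ y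
      = x ⬝ᵥ (diagonal (S.eigenvals μ) * M - M * diagonal (S.eigenvals μ)) *ᵥ y := by
        rw [sub_mulVec, dotProduct_sub, ← mulVec_mulVec, ← mulVec_mulVec,
          dotProduct_mulVec x (diagonal _), ← mulVec_transpose, diagonal_transpose]
    _ = _ := by
        rw [hcomm, Matrix.mul_smul, Matrix.smul_mul, neg_mulVec, smul_mulVec, mul_sub, sub_mul,
          sub_mulVec]
        simp only [mul_vecMulVec, vecMulVec_mul, vecMulVec_mulVec, dotProduct_neg, dotProduct_smul,
          dotProduct_sub, ← dotProduct_mulVec, smul_eq_mul, op_smul_eq_smul, mul_comm]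

end Pairing

section Dressing

variable {ι : Type*} [Fintype ι] [DecidableEq ι] (μ : ι → κ) (t : ι → ℝ) (i : κ)

/-- The dressed eigenfunction `y - ⟨r, v⟩`, where `y` is the `i`-th eigenfunction, `r` the vector of
its inner products with the selected eigenfunctions, and `v` the vector of the latter. -/
noncomputable def dressed (z : ℝ) : ℝ :=
  S.eigenfun i z - S.pairing μ t z (S.gramVec μ i z) (S.eigenvec μ z)

/-- The dressed derivative `y' - ⟨r, v'⟩`, in the notation of `dressed`. It is not the derivative of
the dressed eigenfunction. -/
noncomputable def dressedDeriv (z : ℝ) : ℝ :=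
  deriv (S.eigenfun i) z - S.pairing μ t z (S.gramVec μ i z) (S.eigenvecDeriv μ z)

/-- The exceptional function, as a bordered determinant: the division-free form of
`S.tau μ t z * S.dressed μ t i z`, which makes sense at the zeros of the τ-function too. -/
noncomputable def exceptional (z : ℝ) : ℝ :=
  (fromBlocks (1 + S.gramMatrix μ z * diagonal t) (replicateCol (Fin 1) (S.eigenvec μ z))
    (replicateRow (Fin 1) (S.gramVec μ i z ᵥ* diagonal t))
    (of fun _ _ => S.eigenfun i z)).det

variable {S μ t}

theorem exceptional_eq_tau_mul_dressed {z : ℝ} (hz : S.tau μ t z ≠ 0) :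
    S.exceptional μ t i z = S.tau μ t z * S.dressed μ t i z := by
  rw [exceptional, det_fromBlocks_replicateCol_replicateRow (isUnit_iff_ne_zero.2 hz),
    ← dotProduct_mulVec, mulVec_mulVec, dressed, pairing_apply]
  rfl

theorem eigenval_mul_pairing_gramVec_sub {z : ℝ} (hz : S.tau μ t z ≠ 0) :
    S.eigenval i * S.pairing μ t z (S.gramVec μ i z) (S.eigenvec μ z)
        - S.pairing μ t z (S.gramVec μ i z) (S.eigenvals μ * S.eigenvec μ z)
      = S.p z * S.w z
        * (S.pairing μ t z (S.eigenvec μ z) (S.eigenvec μ z) * S.dressedDeriv μ t i z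
          - S.pairing μ t z (S.eigenvec μ z) (S.eigenvecDeriv μ z) * S.dressed μ t i z) := by
  have hgram := congrArg (S.pairing μ t z · (S.eigenvec μ z)) (S.eigenval_smul_gramVec_sub μ i z)
  simp only [map_sub, map_smul, LinearMap.sub_apply, LinearMap.smul_apply, smul_eq_mul] at hgram
  have hcomm := pairing_eigenvals_mul_sub hz (S.gramVec μ i z) (S.eigenvec μ z)
  rw [pairing_comm hz (S.eigenvecDeriv μ z)] at hgram hcomm
  rw [dressed, dressedDeriv]
  linear_combination hgram + hcomm

theorem hasDerivAt_pairing_eigenvec {z : ℝ} (hz : S.tau μ t z ≠ 0) :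
    HasDerivAt (fun u => S.pairing μ t u (S.eigenvec μ u) (S.eigenvec μ u))
      (2 * S.pairing μ t z (S.eigenvec μ z) (S.eigenvecDeriv μ z)
        - S.w z * S.pairing μ t z (S.eigenvec μ z) (S.eigenvec μ z) ^ 2) z := by
  refine (hasDerivAt_pairing hz (S.hasDerivAt_eigenvec μ z)
    (S.hasDerivAt_eigenvec μ z)).congr_deriv ?_
  rw [pairing_comm hz (S.eigenvecDeriv μ z)]
  ring

theorem hasDerivAt_dressed {z : ℝ} (hz : S.tau μ t z ≠ 0) :
    HasDerivAt (S.dressed μ t i)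
      (S.dressedDeriv μ t i z
        - S.w z * S.pairing μ t z (S.eigenvec μ z) (S.eigenvec μ z) * S.dressed μ t i z) z := by
  refine ((S.hasDerivAt_eigenfun i z).fun_sub (hasDerivAt_pairing hz (S.hasDerivAt_gramVec μ i z)
    (S.hasDerivAt_eigenvec μ z))).congr_deriv ?_
  simp only [map_smul, LinearMap.smul_apply, smul_eq_mul, dressedDeriv, dressed]
  ring

theorem exists_hasDerivAt_dressedDeriv {z : ℝ} (hz : S.tau μ t z ≠ 0) :
    ∃ E', HasDerivAt (S.dressedDeriv μ t i) E' z ∧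
      S.p z * E' = -S.q z * S.dressedDeriv μ t i z + S.eigenval i * S.dressed μ t i z
        + S.p z * S.w z
          * (S.pairing μ t z (S.eigenvec μ z) (S.eigenvec μ z) * S.dressedDeriv μ t i z
            - 2 * S.pairing μ t z (S.eigenvec μ z) (S.eigenvecDeriv μ z)
              * S.dressed μ t i z) := by
  refine ⟨_, (S.hasDerivAt_deriv_eigenfun i z).fun_sub (hasDerivAt_pairing hz
    (S.hasDerivAt_gramVec μ i z) (S.hasDerivAt_eigenvecDeriv μ z)), ?_⟩
  have hode := congrArg (S.pairing μ t z (S.gramVec μ i z)) (S.eigenvec_ode μ z)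
  simp only [map_add, map_smul, LinearMap.smul_apply, smul_eq_mul] at hode ⊢
  have hwronskian := eigenval_mul_pairing_gramVec_sub i hz
  rw [dressedDeriv, dressed] at hwronskian ⊢
  linear_combination S.eigenfun_ode i z - hode + hwronskian

theorem exceptional_ode_of_tau_ne_zero {z : ℝ} (hz : S.tau μ t z ≠ 0) :
    S.p z * (S.tau μ t z * deriv (deriv (S.exceptional μ t i)) z
          - 2 * deriv (S.tau μ t) z * deriv (S.exceptional μ t i) z
          + deriv (deriv (S.tau μ t)) z * S.exceptional μ t i z)
        + S.q z * S.tau μ t z * deriv (S.exceptional μ t i) z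
        + (deriv S.p z - S.q z) * deriv (S.tau μ t) z * S.exceptional μ t i z
      = S.eigenval i * S.tau μ t z * S.exceptional μ t i z := by
  have hnear : ∀ᶠ x in 𝓝 z, S.tau μ t x ≠ 0 := (hasDerivAt_tau hz).continuousAt.eventually_ne hz
  obtain ⟨E', hE', hpE'⟩ := exists_hasDerivAt_dressedDeriv i hz
  have hτ' : deriv (S.tau μ t) =ᶠ[𝓝 z] fun x =>
      S.tau μ t x * (S.w x * S.pairing μ t x (S.eigenvec μ x) (S.eigenvec μ x)) :=
    hnear.mono fun x hx => (hasDerivAt_tau hx).deriv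
  have hC : S.exceptional μ t i =ᶠ[𝓝 z] fun x => S.tau μ t x * S.dressed μ t i x :=
    hnear.mono fun x hx => exceptional_eq_tau_mul_dressed i hx
  have hC' : deriv (S.exceptional μ t i) =ᶠ[𝓝 z] fun x => S.tau μ t x * S.dressedDeriv μ t i x := by
    filter_upwards [hC.deriv, hnear] with x hCx hx
    rw [hCx, ((hasDerivAt_tau hx).fun_mul (hasDerivAt_dressed i hx)).deriv]
    ring
  rw [hC'.deriv_eq, hτ'.deriv_eq, hC'.eq_of_nhds, hτ'.eq_of_nhds, hC.eq_of_nhds,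
    ((hasDerivAt_tau hz).fun_mul hE').deriv,
    ((hasDerivAt_tau hz).fun_mul
      ((S.hasDerivAt_w z).fun_mul (hasDerivAt_pairing_eigenvec hz))).deriv]
  linear_combination S.tau μ t z ^ 2 * (hpE'
    + S.pairing μ t z (S.eigenvec μ z) (S.eigenvec μ z) * S.dressed μ t i z * S.pearson z)

section Perturbation

variable (S μ t)

theorem contDiff_uncurry_tau :
    ContDiff ℝ 2 (Function.uncurry fun s : ℝ => S.tau μ (s • t)) :=
  contDiff_det fun k l => by
    have hgram := (S.contDiff_gram (μ k) (μ l)).comp (contDiff_snd (𝕜 := ℝ) (E := ℝ))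
    simp only [Matrix.add_apply, mul_diagonal, gramMatrix, of_apply, Pi.smul_apply, smul_eq_mul]
    fun_prop

theorem contDiff_uncurry_exceptional :
    ContDiff ℝ 2 (Function.uncurry fun s : ℝ => S.exceptional μ (s • t) i) :=
  contDiff_det fun k l => by
    have hw (j k : κ) := (S.contDiff_gram j k).comp (contDiff_snd (𝕜 := ℝ) (E := ℝ))
    have hy (k : κ) := (S.contDiff_eigenfun k).comp (contDiff_snd (𝕜 := ℝ) (E := ℝ))
    rcases k with k | _ <;> rcases l with l | _
    · simp only [fromBlocks_apply₁₁, Matrix.add_apply, mul_diagonal, gramMatrix, of_apply,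
        Pi.smul_apply, smul_eq_mul]
      have := hw (μ k) (μ l)
      fun_prop
    · exact hy (μ k)
    · simp only [fromBlocks_apply₂₁, replicateRow_apply, vecMul_diagonal, gramVec,
        Pi.smul_apply, smul_eq_mul]
      have := hw i (μ l)
      fun_prop
    · exact hy i

theorem finite_setOf_tau_smul_eq_zero (z : ℝ) : {s : ℝ | S.tau μ (s • t) z = 0}.Finite := by
  simpa only [tau, diagonal_smul, Matrix.mul_smul] using
    finite_setOf_det_one_add_smul_eq_zero (S.gramMatrix μ z * diagonal t)

theorem exceptional_ode (z : ℝ) :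
    S.p z * (S.tau μ t z * deriv (deriv (S.exceptional μ t i)) z
          - 2 * deriv (S.tau μ t) z * deriv (S.exceptional μ t i) z
          + deriv (deriv (S.tau μ t)) z * S.exceptional μ t i z)
        + S.q z * S.tau μ t z * deriv (S.exceptional μ t i) z
        + (deriv S.p z - S.q z) * deriv (S.tau μ t) z * S.exceptional μ t i z
      = S.eigenval i * S.tau μ t z * S.exceptional μ t i z := by
  have hτ := S.contDiff_uncurry_tau μ t
  have hτ' := contDiff_uncurry_deriv (n := 1) hτ
  have hτ'' := contDiff_uncurry_deriv (n := 0) hτ'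
  have hC := S.contDiff_uncurry_exceptional μ t i
  have hC' := contDiff_uncurry_deriv (n := 1) hC
  have hC'' := contDiff_uncurry_deriv (n := 0) hC'
  have hdense := (S.finite_setOf_tau_smul_eq_zero μ t z).countable.dense_compl ℝ
  have hτ₀ : Continuous fun s : ℝ => S.tau μ (s • t) z := hτ.continuous.uncurry_right z
  have hτ₁ : Continuous fun s : ℝ => deriv (S.tau μ (s • t)) z := hτ'.continuous.uncurry_right z
  have hτ₂ : Continuous fun s : ℝ => deriv (deriv (S.tau μ (s • t))) z :=
    hτ''.continuous.uncurry_right z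
  have hC₀ : Continuous fun s : ℝ => S.exceptional μ (s • t) i z := hC.continuous.uncurry_right z
  have hC₁ : Continuous fun s : ℝ => deriv (S.exceptional μ (s • t) i) z :=
    hC'.continuous.uncurry_right z
  have hC₂ : Continuous fun s : ℝ => deriv (deriv (S.exceptional μ (s • t) i)) z :=
    hC''.continuous.uncurry_right z
  have hode := Continuous.ext_on hdense (by fun_prop) (by fun_prop)
    fun s hs => exceptional_ode_of_tau_ne_zero (t := s • t) i hs
  simpa only [one_smul] using congrFun hode 1

end Perturbation

end Dressing

end SturmLiouvilleFamily

section Gegenbauer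

open Finset

/-- The coefficient of `(2 z) ^ (i - 2 k)` in the Gegenbauer polynomial `gegenC α i`. -/
noncomputable def gegenCoeff (α : ℝ) (i k : ℕ) : ℝ :=
  (-1 : ℝ) ^ k * Real.Gamma ((i : ℝ) - k + α)
    / (Real.Gamma α * (Nat.factorial k) * (Nat.factorial (i - 2 * k)))

theorem gegenC_eq_sum (α : ℝ) (i : ℕ) (z : ℝ) :
    gegenC α i z = ∑ k ∈ range (i / 2 + 1), gegenCoeff α i k * (2 * z) ^ (i - 2 * k) :=
  rfl

theorem hasDerivAt_two_mul_pow (n : ℕ) (z : ℝ) :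
    HasDerivAt (fun x : ℝ => (2 * x) ^ n) (n * (2 * z) ^ (n - 1) * 2) z := by
  simpa only [mul_one] using ((hasDerivAt_id' z).const_mul 2).fun_pow n

theorem deriv_gegenC (α : ℝ) (i : ℕ) :
    deriv (gegenC α i) = fun z => ∑ k ∈ range (i / 2 + 1),
      gegenCoeff α i k * ((i - 2 * k : ℕ) * (2 * z) ^ (i - 2 * k - 1) * 2) :=
  funext fun z => (HasDerivAt.fun_sum fun k _ =>
    (hasDerivAt_two_mul_pow (i - 2 * k) z).const_mul (gegenCoeff α i k)).deriv

theorem deriv_deriv_gegenC (α : ℝ) (i : ℕ) (z : ℝ) :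
    deriv (deriv (gegenC α i)) z = ∑ k ∈ range (i / 2 + 1), gegenCoeff α i k *
      ((i - 2 * k : ℕ) * ((i - 2 * k - 1 : ℕ) * (2 * z) ^ (i - 2 * k - 2) * 2) * 2) := by
  rw [deriv_gegenC]
  exact (HasDerivAt.fun_sum fun k _ =>
    (((hasDerivAt_two_mul_pow (i - 2 * k - 1) z).const_mul _).mul_const 2).const_mul _).deriv

theorem contDiff_gegenC (α : ℝ) (i : ℕ) {n : WithTop ℕ∞} : ContDiff ℝ n (gegenC α i) :=
  .sum fun _ _ => by fun_prop

theorem gegenCoeff_succ {α : ℝ} (hα : ∀ n : ℕ, α ≠ -n) {i k : ℕ} (hk : 2 * k + 2 ≤ i) :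
    ((k + 1 : ℕ) : ℝ) * (i - (k + 1 : ℕ) + α) * gegenCoeff α i (k + 1)
      = -((i - 2 * k : ℕ) * (i - 2 * k - 1 : ℕ) * gegenCoeff α i k) := by
  obtain ⟨j, rfl⟩ := Nat.exists_eq_add_of_le hk
  have hsub : 2 * k + 2 + j - 2 * k = j + 2 := by omega
  have hsub' : 2 * k + 2 + j - 2 * (k + 1) = j := by omega
  have hcast : ((2 * k + 2 + j : ℕ) : ℝ) - k + α = k + 1 + j + α + 1 := by
    push_cast
    ring
  have hcast' : ((2 * k + 2 + j : ℕ) : ℝ) - (k + 1 : ℕ) + α = k + 1 + j + α := by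
    push_cast
    ring
  have hne : (k : ℝ) + 1 + j + α ≠ 0 := fun h => hα (k + 1 + j) (by push_cast; linarith)
  have hΓ : Real.Gamma α ≠ 0 := Real.Gamma_ne_zero hα
  have hk_fact : (k.factorial : ℝ) ≠ 0 := mod_cast k.factorial_ne_zero
  have hj_fact : (j.factorial : ℝ) ≠ 0 := mod_cast j.factorial_ne_zero
  simp only [gegenCoeff, hcast, hcast', hsub, hsub', Real.Gamma_add_one hne, Nat.factorial_succ,
    show j + 2 - 1 = j + 1 by rfl]
  push_cast
  field_simp
  ring

theorem sum_gegenCoeff_mul_eq_zero {α : ℝ} (hα : ∀ n : ℕ, α ≠ -n) (i : ℕ) (x : ℝ) :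
    ∑ k ∈ range (i / 2 + 1),
      ((i - 2 * k : ℕ) * (i - 2 * k - 1 : ℕ) * gegenCoeff α i k * x ^ (i - 2 * k - 2)
        + k * (i - k + α) * gegenCoeff α i k * x ^ (i - 2 * k)) = 0 := by
  set E : ℕ → ℝ := fun k => k * (i - k + α) * gegenCoeff α i k * x ^ (i - 2 * k) with hE
  have hstep (k : ℕ) (hk : k ∈ range (i / 2)) :
      (i - 2 * k : ℕ) * (i - 2 * k - 1 : ℕ) * gegenCoeff α i k * x ^ (i - 2 * k - 2) + E k
        = E k - E (k + 1) := by
    have hki : 2 * k + 2 ≤ i := by rw [mem_range] at hk; omega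
    simp only [hE, gegenCoeff_succ hα hki, show i - 2 * (k + 1) = i - 2 * k - 2 by omega]
    ring
  have hlast : ((i - 2 * (i / 2) : ℕ) : ℝ) * (i - 2 * (i / 2) - 1 : ℕ) = 0 := by
    rw [← Nat.cast_mul, Nat.cast_eq_zero, mul_eq_zero]
    omega
  rw [sum_range_succ, sum_congr rfl hstep, sum_range_sub', hlast]
  simp [hE]

theorem gegenbauer_operator_pow (α z : ℝ) (n : ℕ) :
    (1 - z ^ 2) * (n * (((n - 1 : ℕ) : ℝ) * (2 * z) ^ (n - 2) * 2) * 2)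
        - (2 * α + 1) * z * (n * (2 * z) ^ (n - 1) * 2)
      = 4 * (n * (n - 1 : ℕ) * (2 * z) ^ (n - 2)) - n * (2 * α + n) * (2 * z) ^ n := by
  rcases n with _ | _ | n
  · simp
  · rw [Nat.sub_self, Nat.cast_zero]
    ring
  · simp only [Nat.add_sub_cancel, show n + 1 + 1 - 2 = n by rfl]
    push_cast
    ring

theorem gegenC_ode {α : ℝ} (hα : ∀ n : ℕ, α ≠ -n) (i : ℕ) (z : ℝ) :
    (1 - z ^ 2) * deriv (deriv (gegenC α i)) z + -(2 * α + 1) * z * deriv (gegenC α i) z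
      = -i * (2 * α + i) * gegenC α i z := by
  have hsum := congrArg (4 * ·) (sum_gegenCoeff_mul_eq_zero hα i (2 * z))
  simp only [mul_zero, mul_sum] at hsum
  rw [← sub_eq_zero, deriv_deriv_gegenC, deriv_gegenC, gegenC_eq_sum, mul_sum, mul_sum, mul_sum,
    ← sum_add_distrib, ← sum_sub_distrib, ← hsum]
  refine sum_congr rfl fun k hk => ?_
  have hki : 2 * k ≤ i := by rw [mem_range] at hk; omega
  have hcast : ((i - 2 * k : ℕ) : ℝ) = i - 2 * k := by push_cast [hki]; ring
  have hpow := gegenbauer_operator_pow α z (i - 2 * k)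
  rw [hcast] at hpow ⊢
  linear_combination gegenCoeff α i k * hpow

end Gegenbauer

section Specialization

open Matrix

/-- The Gegenbauer polynomials with parameter `ℓ + 1/2`, with base point `-1`. -/
noncomputable def gegenbauerFamily (ℓ : ℕ) : SturmLiouvilleFamily ℕ where
  p z := 1 - z ^ 2
  q z := -(2 * ((ℓ : ℝ) + 1/2) + 1) * z
  w z := (1 - z ^ 2) ^ ℓ
  base := -1
  eigenfun := gegenC ((ℓ : ℝ) + 1/2)
  eigenval i := -i * (2 * ((ℓ : ℝ) + 1/2) + i)
  differentiable_p := by fun_prop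
  contDiff_w := by fun_prop
  contDiff_eigenfun _ := contDiff_gegenC _ _
  p_mul_w_base := by norm_num
  pearson z := by
    have hp : HasDerivAt (fun u : ℝ => 1 - u ^ 2) (-(2 * z)) z := by
      simpa using (hasDerivAt_pow 2 z).const_sub 1
    rw [hp.deriv, (hp.fun_pow ℓ).deriv]
    rcases ℓ with _ | ℓ
    · rw [Nat.cast_zero]
      ring
    · push_cast [Nat.add_sub_cancel]
      ring
  eigenfun_ode := gegenC_ode fun n => by
    have : (0 : ℝ) < ℓ + 1/2 + n := by positivity
    linarith

theorem rMat_eq_one_add (ℓ n : ℕ) (m : ℕ → ℕ) (t : ℕ → ℝ) (z : ℝ) :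
    rMat ℓ n m t z = 1 + (gegenbauerFamily ℓ).gramMatrix (fun k : Fin n => m (k + 1)) z
      * diagonal fun k : Fin n => t (k + 1) := by
  ext k l
  rw [Matrix.add_apply, mul_diagonal, one_apply, mul_comm]
  rfl

theorem tauMat_eq_tau (ℓ n : ℕ) (m : ℕ → ℕ) (t : ℕ → ℝ) :
    tauMat ℓ n m t = (gegenbauerFamily ℓ).tau (fun k : Fin n => m (k + 1))
      fun k : Fin n => t (k + 1) :=
  funext fun z => congrArg det (rMat_eq_one_add ℓ n m t z)

theorem xGegenC_eq_exceptional (ℓ n : ℕ) (m : ℕ → ℕ) (t : ℕ → ℝ) (i : ℕ) :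
    xGegenC ℓ n m t i = (gegenbauerFamily ℓ).exceptional (fun k : Fin n => m (k + 1))
      (fun k : Fin n => t (k + 1)) i := by
  ext z
  refine (congrFun (cramer_eq_adjugate_mulVec _ _) (Fin.last n)).symm.trans ?_
  rw [cramer_apply, SturmLiouvilleFamily.exceptional, ← det_submatrix_equiv_self finSumFinEquiv]
  congr 1
  have hinl (k : Fin n) : finSumFinEquiv (.inl k : Fin n ⊕ Fin 1) = k.castSucc := rfl
  have hinr (k : Fin 1) : finSumFinEquiv (.inr k : Fin n ⊕ Fin 1) = Fin.last n :=
    congrArg (Fin.natAdd n) (Subsingleton.elim k 0)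
  have hle (k : Fin n) : (k : ℕ) + 1 ≤ n := k.isLt
  have hlast : ¬n + 1 ≤ n := n.not_succ_le_self
  have hne (l : Fin n) : l.castSucc ≠ Fin.last n := l.castSucc_ne_last
  ext k l
  rcases k with k | k <;> rcases l with l | l
  · simp only [submatrix_apply, hinl, updateCol_ne (hne l), rMat, of_apply, Fin.val_castSucc, hle,
      if_true, Fin.castSucc_inj, fromBlocks_apply₁₁, Matrix.add_apply, one_apply, mul_diagonal,
      mul_comm]
    rfl
  · simp only [submatrix_apply, hinl, hinr, updateCol_self, Fin.val_castSucc, hle, if_true]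
    rfl
  · simp only [submatrix_apply, hinl, hinr, updateCol_ne (hne l), rMat, of_apply, Fin.val_castSucc,
      Fin.val_last, hle, hlast, if_true, if_false, (hne l).symm, fromBlocks_apply₂₁,
      replicateRow_apply, vecMul_diagonal, zero_add, mul_comm]
    rfl
  · simp only [submatrix_apply, hinr, updateCol_self, Fin.val_last, hlast, if_false]
    rfl

end Specialization

/-- the exceptional Gegenbauer polynomials of the second kind
satisfy the (cleared) eigenvalue equation `T^{(α)}_{τ_m} C_{m;i} = λ_i C_{m;i}`
with `λ_i = -i(2α+i)`, `α = ℓ + 1/2`. -/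
theorem statement17 (ℓ : ℕ) (n : ℕ) (hn : 1 ≤ n) (m : ℕ → ℕ) (t : ℕ → ℝ) :
    ∀ i : ℕ, ∀ z : ℝ,
      (1 - z ^ 2) *
          (tauMat ℓ n m t z * deriv (deriv (xGegenC ℓ n m t i)) z
            - 2 * deriv (tauMat ℓ n m t) z * deriv (xGegenC ℓ n m t i) z
            + deriv (deriv (tauMat ℓ n m t)) z * xGegenC ℓ n m t i z)
        - (2 * ((ℓ : ℝ) + 1/2) + 1) * z * tauMat ℓ n m t z * deriv (xGegenC ℓ n m t i) z
        + (2 * ((ℓ : ℝ) + 1/2) - 1) * z * deriv (tauMat ℓ n m t) z * xGegenC ℓ n m t i z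
      = (-(i : ℝ) * (2 * ((ℓ : ℝ) + 1/2) + i)) * tauMat ℓ n m t z * xGegenC ℓ n m t i z := by
  intro i z
  have hode := (gegenbauerFamily ℓ).exceptional_ode (fun k : Fin n => m (k + 1))
    (fun k => t (k + 1)) i z
  rw [← tauMat_eq_tau, ← xGegenC_eq_exceptional] at hode
  have hp : deriv (gegenbauerFamily ℓ).p z = -(2 * z) := by
    simp [gegenbauerFamily]
  rw [hp] at hode
  simp only [gegenbauerFamily] at hode
  linear_combination hode
end

section
/- Let ℓ ∈ ℕ and α = ℓ + 1/2, n ∈ ℕ, m = (m₁,…,mₙ) ∈ ℕⁿ, and t = (t₁,…,tₙ) ∈ ℝⁿ. With C^{(α)}_i the classical Gegenbauer polynomials, define ρ_{ij}(z) = ∫_{-1}^{z} C^{(α)}_i(u)·C^{(α)}_j(u)·(1-u²)^{ℓ} du, and the matrix objects: R_m(z) the n×n matrix with entries δ_{kℓ'} + t_{ℓ'}·ρ_{m_k m_{ℓ'}}(z), τ_m(z) = det R_m(z), and C_{m;i}(z) = Σ_{j=1}^{n+1} [adj R_{(m,i)}(z)]_{n+1,j}·C^{(α)}_{μ_j}(z)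 with μ = (m₁,…,mₙ,i) and R_{(m,i)}(z) the (n+1)×(n+1) matrix with entries δ_{kℓ'} + s_{ℓ'}·ρ_{μ_k μ_{ℓ'}}(z), s_{ℓ'} = t_{ℓ'} for ℓ' ≤ n, s_{n+1} = 0. Define recursively: ρ̃_{0;ab} = ρ_{ab}, τ̃₀ = 1, π̃_{0;i} = C^{(α)}_i, and for j = 1,…,n: τ̃_j = (1 + t_j·ρ̃_{j-1;m_j m_j})·τ̃_{j-1}, π̃_{j;i} = (1 + t_j·ρ̃_{j-1;m_j m_j})·π̃_{j-1;i} - t_j·ρ̃_{j-1;i m_j}·π̃_{j-1;m_j}, and ρ̃_{j;ab} = ρ̃_{j-1;ab} - t_j·ρ̃_{j-1;a m_j}·ρ̃_{j-1;b m_j}/(1 + t_j·ρ̃_{j-1;m_j m_j}). Then for every z ∈ ℝ such that 1 + t_j·ρ̃_{j-1;m_j m_j}(z) ≠ 0 for all j = 1,…,n, one has τ_m(z) = τ̃_n(z) and C_{m;i}(z) = π̃_{n;i}(z) for every i ∈ ℕ. -/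
/-- The recursively defined `ρ̃_{j;ab}`. -/
noncomputable def rhoRec (ℓ : ℕ) (m : ℕ → ℕ) (t : ℕ → ℝ) : ℕ → ℕ → ℕ → ℝ → ℝ
  | 0 => fun a b z => rhoGegen ℓ a b z
  | j + 1 => fun a b z =>
      rhoRec ℓ m t j a b z -
        t (j + 1) * rhoRec ℓ m t j a (m (j + 1)) z * rhoRec ℓ m t j b (m (j + 1)) z /
          (1 + t (j + 1) * rhoRec ℓ m t j (m (j + 1)) (m (j + 1)) z)

/-- The recursively defined `τ̃_j`. -/
noncomputable def tauRec (ℓ : ℕ) (m : ℕ → ℕ) (t : ℕ → ℝ) : ℕ → ℝ → ℝ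
  | 0 => fun _ => 1
  | j + 1 => fun z =>
      (1 + t (j + 1) * rhoRec ℓ m t j (m (j + 1)) (m (j + 1)) z) * tauRec ℓ m t j z

/-- The recursively defined `π̃_{j;i}`. -/
noncomputable def piRec (ℓ : ℕ) (m : ℕ → ℕ) (t : ℕ → ℝ) : ℕ → ℕ → ℝ → ℝ
  | 0 => fun i z => gegenC ((ℓ : ℝ) + 1/2) i z
  | j + 1 => fun i z =>
      (1 + t (j + 1) * rhoRec ℓ m t j (m (j + 1)) (m (j + 1)) z) * piRec ℓ m t j i z -
        t (j + 1) * rhoRec ℓ m t j i (m (j + 1)) z * piRec ℓ m t j (m (j + 1)) z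

/-!
Each step of the chain is one step of Gaussian elimination. Take the upper left entry
`1 + t₁ ρ_{m₁m₁}` of the τ-matrix as pivot: its Schur complement is the τ-matrix of the remaining
indices `m₂, …, mₙ`, with `ρ` replaced by its Darboux transform. The determinant therefore loses
the factor that relates `τ̃₁` to `τ̃₀`. By Cramer's rule the exceptional polynomial is the
determinant of the bordered matrix with its last column replaced by classical polynomials, and the
same elimination turns this column into `π̃₁`, up to a factor that the pivot absorbs. Induction on
the length of the chain, over all kernels at once, gives both identities.
-/

section SchurComplement

variable {K : Type*} [Field K] {n : ℕ}

/-- The Schur complement of the upper left entry: what remains of a matrix after one step of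
Gaussian elimination with that entry as pivot, which has to be nonzero. -/
def schurComplement (M : Matrix (Fin (n + 1)) (Fin (n + 1)) K) : Matrix (Fin n) (Fin n) K :=
  Matrix.of fun i j => M i.succ j.succ - M i.succ 0 * M 0 j.succ / M 0 0

theorem det_eq_mul_det_schurComplement (M : Matrix (Fin (n + 1)) (Fin (n + 1)) K)
    (hM : M 0 0 ≠ 0) : M.det = M 0 0 * (schurComplement M).det := by
  let N : Matrix (Fin (n + 1)) (Fin (n + 1)) K :=
    Matrix.of (Fin.cons (M 0) fun i j => M i.succ j - M i.succ 0 / M 0 0 * M 0 j)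
  have hdet : M.det = N.det := by
    refine Matrix.det_eq_of_forall_row_eq_smul_add_const
      (Fin.cons 0 fun i => M i.succ 0 / M 0 0) 0 rfl fun i j => ?_
    cases i using Fin.cases <;> simp [N]
  have hcol (i : Fin n) : N i.succ 0 = 0 := by simp [N, hM]
  have hminor : N.submatrix Fin.succ Fin.succ = schurComplement M := by
    ext i j
    simp [N, schurComplement, div_mul_eq_mul_div]
  rw [hdet, Matrix.det_succ_column_zero, Fin.sum_univ_succ]
  simp [hcol, hminor, N]

theorem cramer_succ (M : Matrix (Fin (n + 1)) (Fin (n + 1)) K) (hM : M 0 0 ≠ 0)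
    (v : Fin (n + 1) → K) (j : Fin n) :
    M.cramer v j.succ =
      (schurComplement M).cramer (fun i => M 0 0 * v i.succ - M i.succ 0 * v 0) j := by
  set w : Fin n → K := fun i => v i.succ - M i.succ 0 * v 0 / M 0 0
  have hcol (i : Fin (n + 1)) : M.updateCol j.succ v i 0 = M i 0 :=
    Matrix.updateCol_ne (Fin.succ_ne_zero j).symm
  have hcompl : schurComplement (M.updateCol j.succ v) = (schurComplement M).updateCol j w := by
    ext i k
    obtain rfl | hk := eq_or_ne k j <;> simp [schurComplement, w, *]
  have hw : (fun i => M 0 0 * v i.succ - M i.succ 0 * v 0) = M 0 0 • w := by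
    ext i
    simp [w, mul_sub, mul_div_cancel₀ _ hM]
  rw [Matrix.cramer_apply, det_eq_mul_det_schurComplement _ (hcol 0 ▸ hM), hcol, hcompl, hw,
    map_smul, Pi.smul_apply, Matrix.cramer_apply, smul_eq_mul]

end SchurComplement

section DarbouxChain

variable {K ι : Type*} [Field K]

/-- The factor `1 + t ρ_{cc}` by which the confluent Darboux transformation at the index `c` with
parameter `t` multiplies the τ-function. -/
def darbouxFactor (ρ : ι → ι → K) (c : ι) (t : K) : K :=
  1 + t * ρ c c

/-- The kernel obtained from `ρ` by the confluent Darboux transformation at `c` with parameter `t`.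
For the correction the order `ρ a c * ρ c b` is chosen, so that `ρ` need not be symmetric. -/
def darbouxKernel (ρ : ι → ι → K) (c : ι) (t : K) (a b : ι) : K :=
  ρ a b - t * ρ a c * ρ c b / darbouxFactor ρ c t

/-- The family of eigenfunctions obtained from `π` by the confluent Darboux transformation at `c`
with parameter `t`, normalised so that no denominator occurs. -/
def darbouxFunction (ρ : ι → ι → K) (π : ι → K) (c : ι) (t : K) (i : ι) : K :=
  darbouxFactor ρ c t * π i - t * ρ i c * π c

/-- The matrix `δ_{kl} + t_l ρ_{m_k m_l}` whose determinant is the τ-function. -/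
def darbouxMatrix {n : ℕ} (ρ : ι → ι → K) (m : Fin n → ι) (t : Fin n → K) :
    Matrix (Fin n) (Fin n) K :=
  1 + Matrix.of fun k l => t l * ρ (m k) (m l)

/-- The sequences `ρ`, `τ`, `π` of kernels, τ-functions (at a fixed point) and eigenfunctions arise
by successive confluent Darboux transformations at `m 0, …, m (n - 1)` with parameters
`t 0, …, t (n - 1)`. Their initial terms are arbitrary, and so are the terms beyond `n`. -/
structure IsDarbouxChain {n : ℕ} (m : Fin n → ι) (t : Fin n → K)
    (ρ : ℕ → ι → ι → K) (τ : ℕ → K) (π : ℕ → ι → K) : Prop where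
  kernel_succ (j : Fin n) : ρ (j + 1) = darbouxKernel (ρ j) (m j) (t j)
  tau_succ (j : Fin n) : τ (j + 1) = darbouxFactor (ρ j) (m j) (t j) * τ j
  function_succ (j : Fin n) : π (j + 1) = darbouxFunction (ρ j) (π j) (m j) (t j)

section Step

variable {n : ℕ} (ρ : ι → ι → K) (m : Fin (n + 1) → ι) (t : Fin (n + 1) → K)

theorem darbouxMatrix_zero_zero : darbouxMatrix ρ m t 0 0 = darbouxFactor ρ (m 0) (t 0) := by
  simp [darbouxMatrix, darbouxFactor]

theorem darbouxMatrix_succ_zero (k : Fin n) :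
    darbouxMatrix ρ m t k.succ 0 = t 0 * ρ (m k.succ) (m 0) := by
  simp [darbouxMatrix]

theorem schurComplement_darbouxMatrix :
    schurComplement (darbouxMatrix ρ m t) =
      darbouxMatrix (darbouxKernel ρ (m 0) (t 0)) (Fin.tail m) (Fin.tail t) := by
  ext k l
  have hrow : darbouxMatrix ρ m t 0 l.succ = t l.succ * ρ (m 0) (m l.succ) := by
    simp [darbouxMatrix, (Fin.succ_ne_zero l).symm]
  simp only [schurComplement, Matrix.of_apply, hrow, darbouxMatrix_zero_zero,
    darbouxMatrix_succ_zero]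
  simp only [darbouxMatrix, darbouxKernel, Matrix.add_apply, Matrix.of_apply, Matrix.one_apply,
    Fin.succ_inj, Fin.tail]
  ring

theorem det_darbouxMatrix_succ (hne : darbouxFactor ρ (m 0) (t 0) ≠ 0) :
    (darbouxMatrix ρ m t).det = darbouxFactor ρ (m 0) (t 0) *
      (darbouxMatrix (darbouxKernel ρ (m 0) (t 0)) (Fin.tail m) (Fin.tail t)).det := by
  rw [← darbouxMatrix_zero_zero] at hne
  rw [det_eq_mul_det_schurComplement _ hne, darbouxMatrix_zero_zero, schurComplement_darbouxMatrix]

theorem cramer_darbouxMatrix_succ (π : ι → K) (hne : darbouxFactor ρ (m 0) (t 0) ≠ 0) (j : Fin n) :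
    (darbouxMatrix ρ m t).cramer (π ∘ m) j.succ =
      (darbouxMatrix (darbouxKernel ρ (m 0) (t 0)) (Fin.tail m) (Fin.tail t)).cramer
        (darbouxFunction ρ π (m 0) (t 0) ∘ Fin.tail m) j := by
  rw [← darbouxMatrix_zero_zero] at hne
  rw [cramer_succ _ hne, schurComplement_darbouxMatrix]
  simp only [darbouxMatrix_zero_zero, darbouxMatrix_succ_zero]
  rfl

end Step

namespace IsDarbouxChain

variable {n : ℕ} {ρ : ℕ → ι → ι → K} {τ : ℕ → K} {π : ℕ → ι → K}

theorem tail {m : Fin (n + 1) → ι} {t : Fin (n + 1) → K} (h : IsDarbouxChain m t ρ τ π) :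
    IsDarbouxChain (Fin.tail m) (Fin.tail t)
      (fun j => ρ (j + 1)) (fun j => τ (j + 1)) (fun j => π (j + 1)) where
  kernel_succ j := h.kernel_succ j.succ
  tau_succ j := h.tau_succ j.succ
  function_succ j := h.function_succ j.succ

theorem det_darbouxMatrix_mul {m : Fin n → ι} {t : Fin n → K} (h : IsDarbouxChain m t ρ τ π)
    (hne : ∀ j : Fin n, darbouxFactor (ρ j) (m j) (t j) ≠ 0) :
    (darbouxMatrix (ρ 0) m t).det * τ 0 = τ n := by
  induction n generalizing ρ τ π with
  | zero => simp
  | succ n ih =>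
    have hne₀ : darbouxFactor (ρ 0) (m 0) (t 0) ≠ 0 := hne 0
    have hρ : ρ 1 = darbouxKernel (ρ 0) (m 0) (t 0) := h.kernel_succ 0
    have hτ : τ 1 = darbouxFactor (ρ 0) (m 0) (t 0) * τ 0 := h.tau_succ 0
    calc (darbouxMatrix (ρ 0) m t).det * τ 0
        = (darbouxMatrix (ρ 1) (Fin.tail m) (Fin.tail t)).det * τ 1 := by
          rw [det_darbouxMatrix_succ _ _ _ hne₀, hρ, hτ]
          ring
      _ = τ (n + 1) := ih h.tail fun j => hne j.succ

theorem cramer_darbouxMatrix_last {m : Fin (n + 1) → ι} {t : Fin (n + 1) → K}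
    (h : IsDarbouxChain (Fin.init m) (Fin.init t) ρ τ π)
    (hne : ∀ j : Fin n, darbouxFactor (ρ j) (Fin.init m j) (Fin.init t j) ≠ 0) :
    (darbouxMatrix (ρ 0) m t).cramer (π 0 ∘ m) (Fin.last n) = π n (m (Fin.last n)) := by
  induction n generalizing ρ τ π with
  | zero => exact Matrix.cramer_subsingleton_apply (n := Fin 1) _ _ _
  | succ n ih =>
    have hne₀ : darbouxFactor (ρ 0) (m 0) (t 0) ≠ 0 := hne 0
    have hρ : ρ 1 = darbouxKernel (ρ 0) (m 0) (t 0) := h.kernel_succ 0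
    have hπ : π 1 = darbouxFunction (ρ 0) (π 0) (m 0) (t 0) := h.function_succ 0
    have htail := ih (m := Fin.tail m) (t := Fin.tail t) h.tail fun j => hne j.succ
    rw [← Fin.succ_last, cramer_darbouxMatrix_succ _ _ _ _ hne₀, ← hρ, ← hπ]
    exact htail

end IsDarbouxChain

theorem statement19_general {n : ℕ} {m : Fin n → ι} {t : Fin n → K}
    {ρ : ℕ → ι → ι → K} {τ : ℕ → K} {π : ℕ → ι → K} (h : IsDarbouxChain m t ρ τ π)
    (hτ : τ 0 = 1) (hne : ∀ j : Fin n, darbouxFactor (ρ j) (m j) (t j) ≠ 0) :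
    (darbouxMatrix (ρ 0) m t).det = τ n ∧
      ∀ i, (darbouxMatrix (ρ 0) (Fin.snoc m i) (Fin.snoc t 0)).cramer
        (π 0 ∘ (Fin.snoc m i : Fin (n + 1) → ι)) (Fin.last n) = π n i := by
  refine ⟨by simpa [hτ] using h.det_darbouxMatrix_mul hne, fun i => ?_⟩
  have hm : Fin.init (Fin.snoc m i : Fin (n + 1) → ι) = m := Fin.init_snoc _ _
  have ht : Fin.init (Fin.snoc t 0 : Fin (n + 1) → K) = t := Fin.init_snoc _ _
  rw [IsDarbouxChain.cramer_darbouxMatrix_last (by rwa [hm, ht]) (by rwa [hm, ht]),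
    Fin.snoc_last]

end DarbouxChain

theorem ite_succ_le_eq_snoc {α : Type*} (n : ℕ) (f : ℕ → α) (x : α) :
    (fun k : Fin (n + 1) => if (k : ℕ) + 1 ≤ n then f (k + 1) else x) =
      Fin.snoc (fun k : Fin n => f (k + 1)) x := by
  ext k
  cases k using Fin.lastCases <;> simp

section Gegenbauer

variable (ℓ n : ℕ) (m : ℕ → ℕ) (t : ℕ → ℝ)

theorem rhoRec_comm (j a b : ℕ) (z : ℝ) :
    rhoRec ℓ m t j a b z = rhoRec ℓ m t j b a z := by
  induction j generalizing a b with
  | zero => simp only [rhoRec, rhoGegen, mul_comm (gegenC _ a _)]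
  | succ j ih =>
    simp only [rhoRec, ih a b]
    ring

theorem isDarbouxChain_rec (z : ℝ) :
    IsDarbouxChain (fun k : Fin n => m (k + 1)) (fun k : Fin n => t (k + 1))
      (fun j a b => rhoRec ℓ m t j a b z) (fun j => tauRec ℓ m t j z)
      (fun j i => piRec ℓ m t j i z) where
  kernel_succ j := by
    ext a b
    simp only [rhoRec, darbouxKernel, darbouxFactor, rhoRec_comm ℓ m t j b]
  tau_succ _ := rfl
  function_succ _ := rfl

theorem rMat_eq_darbouxMatrix (z : ℝ) :
    rMat ℓ n m t z = darbouxMatrix (fun a b => rhoGegen ℓ a b z)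
      (fun k => m (k + 1)) (fun k => t (k + 1)) := by
  ext k l
  simp [rMat, darbouxMatrix, Matrix.one_apply]

theorem tauMat_eq_det (z : ℝ) :
    tauMat ℓ n m t z = (darbouxMatrix (fun a b => rhoGegen ℓ a b z)
      (fun k : Fin n => m (k + 1)) (fun k => t (k + 1))).det := by
  rw [tauMat, rMat_eq_darbouxMatrix]

theorem xGegenC_eq_cramer (i : ℕ) (z : ℝ) :
    xGegenC ℓ n m t i z =
      (darbouxMatrix (fun a b => rhoGegen ℓ a b z) (Fin.snoc (fun k : Fin n => m (k + 1)) i)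
        (Fin.snoc (fun k : Fin n => t (k + 1)) 0)).cramer
        ((fun a => gegenC ((ℓ : ℝ) + 1/2) a z) ∘
          (Fin.snoc (fun k : Fin n => m (k + 1)) i : Fin (n + 1) → ℕ)) (Fin.last n) := by
  rw [← ite_succ_le_eq_snoc, ← ite_succ_le_eq_snoc, Matrix.cramer_eq_adjugate_mulVec, xGegenC,
    rMat_eq_darbouxMatrix]
  rfl

end Gegenbauer

/-- equivalence of the matrix-based and the recursive (confluent
Darboux chain) definitions of the exceptional Gegenbauer τ-function and
polynomials of the second kind. -/
theorem statement19 (ℓ : ℕ) (n : ℕ) (hn : 1 ≤ n) (m : ℕ → ℕ) (t : ℕ → ℝ) :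
    ∀ z : ℝ,
      (∀ j ∈ Finset.Icc 1 n, 1 + t j * rhoRec ℓ m t (j - 1) (m j) (m j) z ≠ 0) →
      tauMat ℓ n m t z = tauRec ℓ m t n z ∧
      ∀ i : ℕ, xGegenC ℓ n m t i z = piRec ℓ m t n i z := by
  intro z hz
  have hne (j : Fin n) :
      darbouxFactor (fun a b => rhoRec ℓ m t j a b z) (m (j + 1)) (t (j + 1)) ≠ 0 :=
    hz (j + 1) (Finset.mem_Icc.2 ⟨by lia, j.2⟩)
  simp only [tauMat_eq_det, xGegenC_eq_cramer]
  exact statement19_general (isDarbouxChain_rec ℓ n m t z) rfl hne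
end
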